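/- Suppose the signal transition matrix P is aperiodic and the filter transition kernel Π admits a unique Π-invariant probability measure 𝕄 on P(E). Then for every probability measure 𝕄₀ on P(E) and every bounded continuous function f : P(E) → ℝ, ∫ (Π^n f) d𝕄₀ → ∫ f d𝕄 as n → ∞, where Π^n f denotes the n-fold iterate Π(Π^{n−1} f) with Π^0 f = f. -/

import Mathlib

open MeasureTheory Filter Topology ENNReal

/-- `P(E)`: probability vectors on a countable set `E`, with the topology of
pointwise (equivalently, weak) convergence inherited from `E → ℝ`. -/
abbrev ProbVec (E : Type*) := {p : E → ℝ // (∀ i, 0 ≤ p i) ∧ HasSum p 1}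

/-- Row-vector/matrix product `(p M(y))_j = ∑_i p_i M_{ij}(y)`. -/
noncomputable def rowMul {E F : Type*} (M : F → E → E → ℝ) (p : E → ℝ) (y : F) : E → ℝ :=
  fun j => ∑' i, p i * M y i j

/-- Iterated product `p M(y₁)⋯M(yₙ)` along a list of observations. -/
noncomputable def rowIter {E F : Type*} (M : F → E → E → ℝ) (p : E → ℝ) (ys : List F) : E → ℝ :=
  ys.foldl (rowMul M) p

/-- `p 1 = ∑_j p_j`. -/
noncomputable def rowTot {E : Type*} (p : E → ℝ) : ℝ := ∑' j, p j

/-- One step of the filter: `μ ↦ μM(y)/(μM(y)1)` (junk value `μ` when undefined). -/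
noncomputable def filterStep {E F : Type*} (M : F → E → E → ℝ) (μ : ProbVec E) (y : F) :
    ProbVec E := by
  classical
  exact if h : ∃ ν : ProbVec E, ∀ j,
      (ν : E → ℝ) j * rowTot (rowMul M (μ : E → ℝ) y) = rowMul M (μ : E → ℝ) y j
    then h.choose else μ

/-- The filter `μM(y₁)⋯M(yₙ)/(μM(y₁)⋯M(yₙ)1)` (junk value `μ` when undefined). -/
noncomputable def filterList {E F : Type*} (M : F → E → E → ℝ) (μ : ProbVec E) (ys : List F) :
    ProbVec E := by
  classical
  exact if h : ∃ ν : ProbVec E, ∀ j,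
      (ν : E → ℝ) j * rowTot (rowIter M (μ : E → ℝ) ys) = rowIter M (μ : E → ℝ) ys j
    then h.choose else μ

/-- The filter `π_n^μ(y)` as a function of the observation path `y : ℕ → F`
(the coordinate `y k` represents the observation `y_{k+1}`). -/
noncomputable def filterSeq {E F : Type*} (M : F → E → E → ℝ) (μ : ProbVec E) (y : ℕ → F)
    (n : ℕ) : ProbVec E :=
  filterList M μ (List.ofFn fun k : Fin n => y k)

/-- The filter transition kernel `Π`, acting on functions:
`Πf(μ) = ∫ f(μM(y)/(μM(y)1)) ⬝ (μM(y)1) φ(dy)`. -/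
noncomputable def filterKernel {E F : Type*} [MeasurableSpace F] (M : F → E → E → ℝ)
    (φ : Measure F) (f : ProbVec E → ℝ) (μ : ProbVec E) : ℝ :=
  ∫ y, f (filterStep M μ y) * rowTot (rowMul M (μ : E → ℝ) y) ∂φ

/-- Bounded continuous real functions on `P(E)`. -/
def IsBddCont {E : Type*} (f : ProbVec E → ℝ) : Prop :=
  Continuous f ∧ ∃ C : ℝ, ∀ μ, |f μ| ≤ C

/-- A probability measure `𝕄` on `P(E)` is `Π`-invariant if `∫ Πf d𝕄 = ∫ f d𝕄`
for every bounded continuous `f`. -/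
def IsPiInvariant {E F : Type*} [MeasurableSpace F] (M : F → E → E → ℝ) (φ : Measure F)
    (𝕄 : ProbabilityMeasure (ProbVec E)) : Prop :=
  ∀ f : ProbVec E → ℝ, IsBddCont f →
    ∫ μ, filterKernel M φ f μ ∂(𝕄 : Measure (ProbVec E)) =
      ∫ μ, f μ ∂(𝕄 : Measure (ProbVec E))

/-- The signal transition matrix `P_{ij} = ∫ M_{ij}(y) φ(dy)`. -/
noncomputable def transMat {E F : Type*} [MeasurableSpace F] (M : F → E → E → ℝ)
    (φ : Measure F) : E → E → ℝ :=
  fun i j => ∫ y, M y i j ∂φ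

/-- Powers of a transition matrix on a countable state space. -/
noncomputable def matPow {E : Type*} [DecidableEq E] (P : E → E → ℝ) : ℕ → E → E → ℝ
  | 0 => fun i j => if i = j then 1 else 0
  | n + 1 => fun i j => ∑' k, matPow P n i k * P k j

/-!
Call `f` on `P(E)` convex if it satisfies Jensen's inequality. Since the unnormalised update
`μ ↦ μM(y)` is linear, `Π` preserves convexity. Among the measures with barycenter `λ`, every convex
function has its least integral at `δ_λ` and its greatest at the mixture `∑ λᵢ δ_{eᵢ}` of the
vertices, and the barycenter evolves by `P`, which fixes `λ`. So the integrals of a convex function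
are monotone along the orbits of these two measures under `Π`. Exponentials of linear functionals
are convex and measure-determining, so both orbits converge weakly; the limits are invariant, that
is, equal to `𝕄`.

For an arbitrary initial measure with barycenter `b`, aperiodicity gives `b Pᵏ → λ`, while for
convex `f` Jensen's inequality bounds `∫ Πᵏ⁺ˡ f d𝕄₀` below by `Πˡ f (b Pᵏ)` and above by
`∑ᵢ (b Pᵏ)ᵢ Πˡ f (eᵢ)`. Letting `k → ∞` and then `l → ∞`, both bounds tend to `∫ f d𝕄`.
-/

section DoubleSeries

variable {α β : Type*} {a : α → β → ℝ} {r : α → ℝ} {s : ℝ}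

theorem summable_uncurry_of_nonneg (ha : ∀ i j, 0 ≤ a i j) (hr : ∀ i, HasSum (a i) (r i))
    (hs : Summable r) : Summable (Function.uncurry a) := by
  refine (summable_prod_of_nonneg fun x => ha x.1 x.2).2 ⟨fun i => (hr i).summable, ?_⟩
  exact hs.congr fun i => (hr i).tsum_eq.symm

theorem summable_column_of_nonneg (ha : ∀ i j, 0 ≤ a i j) (hr : ∀ i, HasSum (a i) (r i))
    (hs : Summable r) (j : β) : Summable fun i => a i j :=
  (summable_uncurry_of_nonneg ha hr hs).prod_symm.prod_factor j

theorem hasSum_tsum_column_of_nonneg (ha : ∀ i j, 0 ≤ a i j) (hr : ∀ i, HasSum (a i) (r i))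
    (hs : HasSum r s) : HasSum (fun j => ∑' i, a i j) s := by
  have hsum := summable_uncurry_of_nonneg ha hr hs.summable
  have htotal : HasSum (Function.uncurry a) s :=
    (hsum.hasSum.prod_fiberwise hr).unique hs ▸ hsum.hasSum
  exact ((Equiv.prodComm β α).hasSum_iff.2 htotal).prod_fiberwise
    fun j => (summable_column_of_nonneg ha hr hs.summable j).hasSum

end DoubleSeries

namespace ProbVec

variable {E : Type*}

theorem nonneg (μ : ProbVec E) (i : E) : 0 ≤ μ.1 i := μ.2.1 i

theorem hasSum (μ : ProbVec E) : HasSum μ.1 1 := μ.2.2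

theorem summable (μ : ProbVec E) : Summable μ.1 := μ.hasSum.summable

theorem tsum_eq_one (μ : ProbVec E) : ∑' i, μ.1 i = 1 := μ.hasSum.tsum_eq

theorem le_one (μ : ProbVec E) (i : E) : μ.1 i ≤ 1 := le_hasSum μ.hasSum i fun j _ => μ.nonneg j

theorem exists_pos (μ : ProbVec E) : ∃ i, 0 < μ.1 i := by
  by_contra! h
  have hzero : μ.1 = 0 := funext fun i => (h i).antisymm (μ.nonneg i)
  simpa [hzero] using μ.tsum_eq_one

theorem ext {μ ν : ProbVec E} (h : ∀ i, μ.1 i = ν.1 i) : μ = ν := Subtype.ext (funext h)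

theorem tendsto_nhds_iff {ι : Type*} {l : Filter ι} {p : ι → ProbVec E} {q : ProbVec E} :
    Tendsto p l (𝓝 q) ↔ ∀ i, Tendsto (fun n => (p n).1 i) l (𝓝 (q.1 i)) := by
  rw [tendsto_subtype_rng, tendsto_pi_nhds]

theorem continuous_coord (i : E) : Continuous fun μ : ProbVec E => μ.1 i :=
  (continuous_apply i).comp continuous_subtype_val

theorem measurable_coord (i : E) : Measurable fun μ : ProbVec E => μ.1 i :=
  (measurable_pi_apply i).comp measurable_subtype_coe

theorem measurable_iff {Ω : Type*} [MeasurableSpace Ω] {g : Ω → ProbVec E} :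
    Measurable g ↔ ∀ i, Measurable fun ω => (g ω).1 i :=
  ⟨fun hg i => (measurable_coord i).comp hg, fun hg => (measurable_pi_lambda _ hg).subtype_mk⟩

instance [Countable E] : SecondCountableTopology (ProbVec E) :=
  (IsEmbedding.subtypeVal : IsEmbedding (Subtype.val : ProbVec E → E → ℝ)).secondCountableTopology

instance [Countable E] : TopologicalSpace.MetrizableSpace (ProbVec E) :=
  TopologicalSpace.metrizableSpace_of_t3_secondCountable _

/-- The `ℓ¹` distance, i.e. twice the total variation distance. -/
noncomputable def l1Dist (p q : ProbVec E) : ℝ := ∑' i, |p.1 i - q.1 i|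

theorem summable_abs_sub (p q : ProbVec E) : Summable fun i => |p.1 i - q.1 i| :=
  (p.summable.sub q.summable).abs

theorem l1Dist_nonneg (p q : ProbVec E) : 0 ≤ l1Dist p q := tsum_nonneg fun _ => abs_nonneg _

theorem abs_l1Dist_sub_l1Dist_le (p q r : ProbVec E) :
    |l1Dist p r - l1Dist q r| ≤ l1Dist p q := by
  rw [l1Dist, l1Dist, ← (summable_abs_sub p r).tsum_sub (summable_abs_sub q r)]
  rw [← Real.norm_eq_abs]
  refine tsum_of_norm_bounded (summable_abs_sub p q).hasSum fun i => ?_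
  simpa using abs_abs_sub_abs_le (p.1 i - r.1 i) (q.1 i - r.1 i)

-- As `p` and `q` have equal total mass, `|p - q|` has the same sum as `2 (q - p)⁺ ≤ 2 q`.
theorem tendsto_l1Dist {ι : Type*} {l : Filter ι} {p : ι → ProbVec E} {q : ProbVec E}
    (h : Tendsto p l (𝓝 q)) : Tendsto (fun n => l1Dist (p n) q) l (𝓝 0) := by
  have hle (n i) : max (q.1 i - (p n).1 i) 0 ≤ q.1 i :=
    max_le (sub_le_self _ ((p n).nonneg i)) (q.nonneg i)
  have hsum (n) : Summable fun i => max (q.1 i - (p n).1 i) 0 :=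
    .of_nonneg_of_le (fun _ => le_max_right _ _) (hle n) q.summable
  have hdist (n) : l1Dist (p n) q = 2 * ∑' i, max (q.1 i - (p n).1 i) 0 := by
    have habs (i) : |(p n).1 i - q.1 i|
        = (p n).1 i - q.1 i + 2 * max (q.1 i - (p n).1 i) 0 := by
      rcases le_total ((p n).1 i) (q.1 i) with hi | hi
      · rw [abs_of_nonpos (by linarith), max_eq_left (by linarith)]; ring
      · rw [abs_of_nonneg (by linarith), max_eq_right (by linarith)]; ring
    simp_rw [l1Dist, habs]
    rw [((p n).summable.sub q.summable).tsum_add ((hsum n).mul_left 2),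
      (p n).summable.tsum_sub q.summable, tsum_eq_one, tsum_eq_one, tsum_mul_left]
    ring
  have hlim : Tendsto (fun n => ∑' i, max (q.1 i - (p n).1 i) 0) l (𝓝 (∑' _ : E, 0)) := by
    refine tendsto_tsum_of_dominated_convergence q.summable (fun i => ?_)
      (.of_forall fun n i => ?_)
    · simpa using ((tendsto_nhds_iff.1 h i).const_sub (q.1 i)).max
        (tendsto_const_nhds (x := (0 : ℝ)))
    · rw [Real.norm_of_nonneg (le_max_right _ _)]
      exact hle n i
  simp_rw [hdist]
  simpa using hlim.const_mul 2

theorem continuous_of_abs_sub_le_l1Dist {f : ProbVec E → ℝ} {C : ℝ}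
    (hf : ∀ p q, |f p - f q| ≤ C * l1Dist p q) : Continuous f := by
  refine continuous_iff_continuousAt.2 fun μ => ?_
  rw [ContinuousAt, tendsto_iff_norm_sub_tendsto_zero]
  have hdist : Tendsto (fun p => C * l1Dist p μ) (𝓝 μ) (𝓝 0) := by
    simpa using (tendsto_l1Dist tendsto_id).const_mul C
  exact squeeze_zero (fun _ => norm_nonneg _) (fun p => hf p μ) hdist

theorem continuous_l1Dist_left (r : ProbVec E) : Continuous fun p => l1Dist p r :=
  continuous_of_abs_sub_le_l1Dist (C := 1) fun p q => by
    simpa using abs_l1Dist_sub_l1Dist_le p q r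

theorem exists_lt_of_ne {p q : ProbVec E} (h : p ≠ q) : ∃ i, p.1 i < q.1 i := by
  by_contra! hle
  have hzero := (hasSum_zero_iff_of_nonneg (fun i => sub_nonneg.2 (hle i))).1
    (sub_self (1 : ℝ) ▸ p.hasSum.sub q.hasSum)
  exact h (ext fun i => sub_eq_zero.1 (congrFun hzero i))

section Pairing

variable {g : E → ℝ} {C : ℝ}

theorem summable_mul (μ : ProbVec E) (hg : ∀ i, |g i| ≤ C) : Summable fun i => μ.1 i * g i :=
  .of_norm_bounded (μ.summable.mul_right C) fun i => by
    rw [norm_mul, Real.norm_of_nonneg (μ.nonneg i)]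
    exact mul_le_mul_of_nonneg_left (hg i) (μ.nonneg i)

theorem continuous_tsum_mul (hg : ∀ i, |g i| ≤ C) :
    Continuous fun μ : ProbVec E => ∑' i, μ.1 i * g i := by
  refine continuous_of_abs_sub_le_l1Dist (C := C) fun p q => ?_
  rw [← (p.summable_mul hg).tsum_sub (q.summable_mul hg), l1Dist, ← tsum_mul_left,
    ← Real.norm_eq_abs]
  refine tsum_of_norm_bounded ((summable_abs_sub p q).mul_left C).hasSum fun i => ?_
  rw [← sub_mul, norm_mul, mul_comm, Real.norm_eq_abs, Real.norm_eq_abs]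
  exact mul_le_mul_of_nonneg_right (hg i) (abs_nonneg _)

end Pairing

theorem isCompact_setOf_le_mul (r : ProbVec E) (C : ℝ) :
    IsCompact {p : ProbVec E | ∀ i, p.1 i ≤ C * r.1 i} := by
  rw [IsEmbedding.subtypeVal.isCompact_iff]
  let box : Set (E → ℝ) := Set.pi Set.univ fun i => Set.Icc 0 (C * r.1 i)
  have hbox : IsCompact box := isCompact_univ_pi fun _ => isCompact_Icc
  have hcont : ContinuousOn (fun q : E → ℝ => ∑' i, q i) box := by
    refine fun q _ => tendsto_tsum_of_dominated_convergence (r.summable.mul_left C)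
      (fun i => ((continuous_apply i).tendsto q).mono_left nhdsWithin_le_nhds) ?_
    filter_upwards [self_mem_nhdsWithin] with p hp i
    obtain ⟨hp0, hpC⟩ := hp i trivial
    rwa [Real.norm_of_nonneg hp0]
  have himage : Subtype.val '' {p : ProbVec E | ∀ i, p.1 i ≤ C * r.1 i}
      = box ∩ (fun q : E → ℝ => ∑' i, q i) ⁻¹' {1} := by
    ext q
    constructor
    · rintro ⟨p, hp, rfl⟩
      exact ⟨fun i _ => ⟨nonneg p i, hp i⟩, tsum_eq_one p⟩
    · rintro ⟨hq, hq1⟩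
      have hsum : Summable q := .of_nonneg_of_le (fun i => (hq i trivial).1)
        (fun i => (hq i trivial).2) (r.summable.mul_left C)
      exact ⟨⟨q, fun i => (hq i trivial).1, hq1 ▸ hsum.hasSum⟩, fun i => (hq i trivial).2, rfl⟩
  rw [himage]
  exact hbox.of_isClosed_subset (hcont.preimage_isClosed_of_isClosed hbox.isClosed
    isClosed_singleton) Set.inter_subset_left

section Vertex

variable [DecidableEq E]

/-- The point mass `δ_i`, a vertex of the simplex of probability vectors. -/
def vertex (i : E) : ProbVec E :=
  ⟨Pi.single i 1, fun j => Pi.single_apply i (1 : ℝ) j ▸ by positivity, hasSum_pi_single i 1⟩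

theorem tsum_vertex_mul (i : E) (g : E → ℝ) : ∑' j, (vertex i).1 j * g j = g i := by
  rw [tsum_eq_single i fun j hj => by simp [vertex, hj]]
  simp [vertex]

end Vertex

end ProbVec

theorem eq_of_mapClusterPt_of_tendsto {X α : Type*} [TopologicalSpace X] [T2Space X] {x y : X}
    {l : Filter α} {u : α → X} (hx : MapClusterPt x l u) (hy : Tendsto u l (𝓝 y)) : x = y :=
  eq_of_nhds_neBot (hx.neBot.mono (inf_le_inf_left _ hy))

/-- Row-stochastic matrices on a countable state space. -/
structure IsStochastic {E : Type*} (P : E → E → ℝ) : Prop where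
  nonneg : ∀ i j, 0 ≤ P i j
  hasSum : ∀ i, HasSum (P i) 1

namespace IsStochastic

open ProbVec

variable {E : Type*} {P Q : E → E → ℝ}

theorem abs_le_one (hP : IsStochastic P) (i j : E) : |P i j| ≤ 1 :=
  (abs_of_nonneg (hP.nonneg i j)).trans_le (le_hasSum (hP.hasSum i) j fun k _ => hP.nonneg i k)

theorem hasSum_mul (hP : IsStochastic P) {w : E → ℝ} {s : ℝ} (hw : ∀ i, 0 ≤ w i)
    (hs : HasSum w s) : HasSum (fun j => ∑' i, w i * P i j) s :=
  hasSum_tsum_column_of_nonneg (fun i j => mul_nonneg (hw i) (hP.nonneg i j))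
    (fun i => by simpa using (hP.hasSum i).mul_left (w i)) hs

/-- The law `μ P` after one step of the chain started from `μ`. -/
noncomputable def step (hP : IsStochastic P) (μ : ProbVec E) : ProbVec E :=
  ⟨fun j => ∑' i, μ.1 i * P i j,
    fun j => tsum_nonneg fun i => mul_nonneg (μ.nonneg i) (hP.nonneg i j),
    hP.hasSum_mul μ.nonneg μ.hasSum⟩

theorem continuous_step (hP : IsStochastic P) : Continuous hP.step :=
  (continuous_pi fun j => continuous_tsum_mul fun i => hP.abs_le_one i j).subtype_mk _

theorem mul_le_step (hP : IsStochastic P) (μ : ProbVec E) (i j : E) :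
    μ.1 i * P i j ≤ (hP.step μ).1 j :=
  (μ.summable_mul fun i => hP.abs_le_one i j).le_tsum i
    fun k _ => mul_nonneg (μ.nonneg k) (hP.nonneg k j)

theorem step_le_mul_step (hP : IsStochastic P) {p q : ProbVec E} {C : ℝ}
    (h : ∀ i, p.1 i ≤ C * q.1 i) (j : E) : (hP.step p).1 j ≤ C * (hP.step q).1 j := by
  refine hasSum_le (fun i => ?_) (p.summable_mul fun i => hP.abs_le_one i j).hasSum
    ((q.summable_mul fun i => hP.abs_le_one i j).hasSum.mul_left C)
  rw [← mul_assoc]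
  exact mul_le_mul_of_nonneg_right (h i) (hP.nonneg i j)

theorem mul (hQ : IsStochastic Q) (hP : IsStochastic P) :
    IsStochastic fun i j => ∑' k, Q i k * P k j where
  nonneg i j := tsum_nonneg fun k => mul_nonneg (hQ.nonneg i k) (hP.nonneg k j)
  hasSum i := hP.hasSum_mul (hQ.nonneg i) (hQ.hasSum i)

theorem step_step (hQ : IsStochastic Q) (hP : IsStochastic P) (μ : ProbVec E) :
    hP.step (hQ.step μ) = (hQ.mul hP).step μ := by
  refine ProbVec.ext fun j => ?_
  have hrow (i : E) : Summable fun k => Q i k * P k j :=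
    summable_mul ⟨Q i, hQ.nonneg i, hQ.hasSum i⟩ fun k => hP.abs_le_one k j
  calc ∑' k, (∑' i, μ.1 i * Q i k) * P k j
      = ∑' k, ∑' i, μ.1 i * (Q i k * P k j) := by simp_rw [← tsum_mul_right, mul_assoc]
    _ = ∑' i, μ.1 i * ∑' k, Q i k * P k j :=
        (hasSum_tsum_column_of_nonneg
          (fun i k => mul_nonneg (μ.nonneg i) (mul_nonneg (hQ.nonneg i k) (hP.nonneg k j)))
          (fun i => (hrow i).hasSum.mul_left _)
          (μ.summable_mul fun i => (hQ.mul hP).abs_le_one i j).hasSum).tsum_eq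

theorem hasSum_tsum_abs_sub_mul (hP : IsStochastic P) (p q : ProbVec E) :
    HasSum (fun j => ∑' i, |p.1 i - q.1 i| * P i j) (l1Dist p q) :=
  hP.hasSum_mul (fun _ => abs_nonneg _) (summable_abs_sub p q).hasSum

theorem summable_abs_sub_mul (hP : IsStochastic P) (p q : ProbVec E) (j : E) :
    Summable fun i => |p.1 i - q.1 i| * P i j :=
  summable_column_of_nonneg (a := fun i j => |p.1 i - q.1 i| * P i j)
    (fun i j => mul_nonneg (abs_nonneg _) (hP.nonneg i j))
    (fun i => (hP.hasSum i).mul_left _) ((summable_abs_sub p q).mul_right 1) j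

theorem hasSum_sub_mul (hP : IsStochastic P) (p q : ProbVec E) (j : E) :
    HasSum (fun i => (p.1 i - q.1 i) * P i j) ((hP.step p).1 j - (hP.step q).1 j) := by
  have hstep (μ : ProbVec E) : HasSum (fun i => μ.1 i * P i j) ((hP.step μ).1 j) :=
    (μ.summable_mul fun i => hP.abs_le_one i j).hasSum
  simpa only [sub_mul] using (hstep p).sub (hstep q)

theorem abs_step_sub_step_le (hP : IsStochastic P) (p q : ProbVec E) (j : E) :
    |(hP.step p).1 j - (hP.step q).1 j| ≤ ∑' i, |p.1 i - q.1 i| * P i j := by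
  rw [← (hP.hasSum_sub_mul p q j).tsum_eq, ← Real.norm_eq_abs]
  refine tsum_of_norm_bounded (hP.summable_abs_sub_mul p q j).hasSum fun i => ?_
  rw [Real.norm_eq_abs, abs_mul, abs_of_nonneg (hP.nonneg i j)]

theorem l1Dist_step_le (hP : IsStochastic P) (p q : ProbVec E) :
    l1Dist (hP.step p) (hP.step q) ≤ l1Dist p q :=
  hasSum_le (hP.abs_step_sub_step_le p q) (summable_abs_sub _ _).hasSum
    (hP.hasSum_tsum_abs_sub_mul p q)

-- The terms of `∑ (p i - q i) * P i j` at `a` and at `b` have opposite signs, hence cancel.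
theorem abs_step_sub_step_lt (hP : IsStochastic P) {p q : ProbVec E} {a b j : E}
    (ha : p.1 a < q.1 a) (hb : q.1 b < p.1 b) (haj : 0 < P a j) (hbj : 0 < P b j) :
    |(hP.step p).1 j - (hP.step q).1 j| < ∑' i, |p.1 i - q.1 i| * P i j := by
  have habs := (hP.summable_abs_sub_mul p q j).hasSum
  have hdiff := hP.hasSum_sub_mul p q j
  refine abs_lt.2 ⟨hasSum_lt (i := b) (fun i => ?_) ?_ habs.neg hdiff,
    hasSum_lt (i := a) (fun i => ?_) ?_ hdiff habs⟩
  · rw [← neg_mul]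
    exact mul_le_mul_of_nonneg_right (neg_abs_le _) (hP.nonneg i j)
  · rw [← neg_mul]
    exact mul_lt_mul_of_pos_right ((neg_nonpos.2 (abs_nonneg _)).trans_lt (sub_pos.2 hb)) hbj
  · exact mul_le_mul_of_nonneg_right (le_abs_self _) (hP.nonneg i j)
  · exact mul_lt_mul_of_pos_right ((sub_neg.2 ha).trans_le (abs_nonneg _)) haj

theorem l1Dist_step_lt (hP : IsStochastic P) {p q : ProbVec E} {a b j : E}
    (ha : p.1 a < q.1 a) (hb : q.1 b < p.1 b) (haj : 0 < P a j) (hbj : 0 < P b j) :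
    l1Dist (hP.step p) (hP.step q) < l1Dist p q :=
  hasSum_lt (hP.abs_step_sub_step_le p q) (hP.abs_step_sub_step_lt ha hb haj hbj)
    (summable_abs_sub _ _).hasSum (hP.hasSum_tsum_abs_sub_mul p q)

section Powers

variable [DecidableEq E]

theorem pow (hP : IsStochastic P) (n : ℕ) : IsStochastic (matPow P n) := by
  induction n with
  | zero =>
    have hrow (i : E) : matPow P 0 i = (vertex i).1 := by
      ext j
      simp [matPow, vertex, Pi.single_apply, eq_comm]
    exact ⟨fun i => hrow i ▸ (vertex i).nonneg, fun i => hrow i ▸ (vertex i).hasSum⟩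
  | succ n ih => exact ih.mul hP

theorem iterate_step (hP : IsStochastic P) (n : ℕ) (μ : ProbVec E) :
    hP.step^[n] μ = (hP.pow n).step μ := by
  induction n with
  | zero =>
    refine ProbVec.ext fun j => ?_
    change _ = ∑' i, μ.1 i * if i = j then 1 else 0
    simp
  | succ n ih => rw [Function.iterate_succ_apply', ih, step_step]; rfl

theorem step_vertex (hP : IsStochastic P) (i : E) : (hP.step (vertex i)).1 = P i :=
  funext fun j => tsum_vertex_mul i fun k => P k j

theorem matPow_mul_matPow_le (hP : IsStochastic P) (m n : ℕ) (i j k : E) :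
    matPow P m i j * matPow P n j k ≤ matPow P (n + m) i k := by
  have h := (hP.pow n).mul_le_step ((hP.pow m).step (vertex i)) j k
  rwa [← hP.iterate_step, ← hP.iterate_step, ← Function.iterate_add_apply, iterate_step,
    iterate_step, step_vertex, step_vertex] at h

theorem eventually_matPow_pos (hP : IsStochastic P) (hirr : ∀ i j, ∃ n, 0 < matPow P n i j)
    (haper : ∀ i, ∀ᶠ n in atTop, 0 < matPow P n i i) (i j : E) :
    ∀ᶠ n in atTop, 0 < matPow P n i j := by
  obtain ⟨m, hm⟩ := hirr i j
  rw [← map_add_atTop_eq_nat m, eventually_map]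
  filter_upwards [haper j] with n hn
  exact (mul_pos hm hn).trans_le (hP.matPow_mul_matPow_le m n i j j)

theorem pos_of_step_eq_self (hP : IsStochastic P) (hirr : ∀ i j, ∃ n, 0 < matPow P n i j)
    {π : ProbVec E} (hπ : hP.step π = π) (j : E) : 0 < π.1 j := by
  obtain ⟨i, hi⟩ := π.exists_pos
  obtain ⟨n, hn⟩ := hirr i j
  calc 0 < π.1 i * matPow P n i j := mul_pos hi hn
    _ ≤ ((hP.pow n).step π).1 j := (hP.pow n).mul_le_step π i j
    _ = π.1 j := by rw [← hP.iterate_step, Function.iterate_fixed hπ]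

-- Along the orbit of `p` the distance to `π` decreases to a limit, so it is constant along the
-- orbit of any cluster point `q`; but it eventually drops strictly if `q ≠ π`.
theorem tendsto_iterate_step_of_le (hP : IsStochastic P)
    (hpos : ∀ i j, ∀ᶠ n in atTop, 0 < matPow P n i j) {π p : ProbVec E} (hπ : hP.step π = π)
    {C : ℝ} (hp : ∀ i, p.1 i ≤ C * π.1 i) : Tendsto (fun n => hP.step^[n] p) atTop (𝓝 π) := by
  have hdom (n : ℕ) (i : E) : (hP.step^[n] p).1 i ≤ C * π.1 i := by
    rw [iterate_step, ← Function.iterate_fixed hπ n, iterate_step]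
    exact (hP.pow n).step_le_mul_step hp i
  have hanti : Antitone fun n => l1Dist (hP.step^[n] p) π := antitone_nat_of_succ_le fun n => by
    simpa only [Function.iterate_succ_apply', hπ] using hP.l1Dist_step_le (hP.step^[n] p) π
  obtain ⟨L, hL⟩ : ∃ L, Tendsto (fun n => l1Dist (hP.step^[n] p) π) atTop (𝓝 L) :=
    ⟨_, tendsto_atTop_ciInf hanti ⟨0, Set.forall_mem_range.2 fun n => l1Dist_nonneg _ _⟩⟩
  refine (isCompact_setOf_le_mul π C).tendsto_nhds_of_unique_mapClusterPt
    (.of_forall hdom) fun q _ hq => ?_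
  have hconst (m : ℕ) : l1Dist (hP.step^[m] q) π = L := by
    have hcont : Continuous fun r => l1Dist (hP.step^[m] r) π :=
      (continuous_l1Dist_left π).comp (hP.continuous_step.iterate m)
    refine eq_of_mapClusterPt_of_tendsto (hq.tendsto_comp (hcont.tendsto q)) ?_
    simpa only [Function.comp_def, ← Function.iterate_add_apply, add_comm m] using
        (tendsto_add_atTop_iff_nat m).2 hL
  by_contra hne
  obtain ⟨a, ha⟩ := exists_lt_of_ne hne
  obtain ⟨b, hb⟩ := exists_lt_of_ne (Ne.symm hne)
  obtain ⟨n, haj, hbj⟩ := ((hpos a a).and (hpos b a)).exists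
  have hlt := (hP.pow n).l1Dist_step_lt ha hb haj hbj
  rw [← hP.iterate_step, ← hP.iterate_step, Function.iterate_fixed hπ, hconst n] at hlt
  exact hlt.ne (hconst 0).symm

theorem tendsto_iterate_step (hP : IsStochastic P) (hirr : ∀ i j, ∃ n, 0 < matPow P n i j)
    (haper : ∀ i, ∀ᶠ n in atTop, 0 < matPow P n i i) {π : ProbVec E} (hπ : hP.step π = π)
    (μ : ProbVec E) : Tendsto (fun n => hP.step^[n] μ) atTop (𝓝 π) := by
  have hvertex (i j : E) : Tendsto (fun n => matPow P n i j) atTop (𝓝 (π.1 j)) := by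
    have hle (k : E) : (vertex i).1 k ≤ (π.1 i)⁻¹ * π.1 k := by
      rcases eq_or_ne k i with rfl | hki
      · rw [inv_mul_cancel₀ (hP.pos_of_step_eq_self hirr hπ k).ne']
        exact (vertex k).le_one k
      · simpa [vertex, hki] using mul_nonneg (inv_nonneg.2 (π.nonneg i)) (π.nonneg k)
    simpa only [iterate_step, step_vertex] using ProbVec.tendsto_nhds_iff.1
      (hP.tendsto_iterate_step_of_le (hP.eventually_matPow_pos hirr haper) hπ hle) j
  refine ProbVec.tendsto_nhds_iff.2 fun j => ?_
  have hlim : Tendsto (fun n => ∑' i, μ.1 i * matPow P n i j) atTop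
      (𝓝 (∑' i, μ.1 i * π.1 j)) := by
    refine tendsto_tsum_of_dominated_convergence μ.summable
      (fun i => (hvertex i j).const_mul (μ.1 i)) (.of_forall fun n i => ?_)
    rw [norm_mul, Real.norm_of_nonneg (μ.nonneg i)]
    exact mul_le_of_le_one_right (μ.nonneg i) ((hP.pow n).abs_le_one i j)
  simp_rw [iterate_step]
  rwa [tsum_mul_right, tsum_eq_one, one_mul] at hlim

end Powers

end IsStochastic

section WeakConvergence

open BoundedContinuousFunction

theorem ext_of_forall_mem_submonoid_integral_eq {X : Type*} [TopologicalSpace X] [PolishSpace X]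
    [MeasurableSpace X] [BorelSpace X] {μ ν : Measure X} [IsFiniteMeasure μ] [IsFiniteMeasure ν]
    (S : Submonoid (X →ᵇ ℝ)) (hsep : ∀ x y, x ≠ y → ∃ f ∈ S, f x ≠ f y)
    (h : ∀ f ∈ S, ∫ x, f x ∂μ = ∫ x, f x ∂ν) : μ = ν := by
  let A : StarSubalgebra ℝ (X →ᵇ ℝ) :=
    { Algebra.adjoin ℝ (S : Set (X →ᵇ ℝ)) with
      star_mem' := fun {f} hf => by rwa [show star f = f by ext x; simp] }
  refine ext_of_forall_mem_subalgebra_integral_eq_of_polish (𝕜 := ℝ) (A := A) (fun x y hxy => ?_)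
    fun g hg => ?_
  · obtain ⟨f, hf, hne⟩ := hsep x y hxy
    exact ⟨_, ⟨f.toContinuousMap, ⟨f, Algebra.subset_adjoin hf, rfl⟩, rfl⟩, hne⟩
  · have hspan : g ∈ Submodule.span ℝ (S : Set (X →ᵇ ℝ)) := by
      have hg' : g ∈ Subalgebra.toSubmodule (Algebra.adjoin ℝ (S : Set (X →ᵇ ℝ))) := hg
      rwa [Algebra.adjoin_eq_span, Submonoid.closure_eq] at hg'
    clear hg
    induction hspan using Submodule.span_induction with
    | mem f hf => exact h f hf
    | zero => simp
    | add f₁ f₂ _ _ h₁ h₂ =>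
      change ∫ x, f₁ x + f₂ x ∂μ = ∫ x, f₁ x + f₂ x ∂ν
      rw [integral_add (f₁.integrable _) (f₂.integrable _),
        integral_add (f₁.integrable _) (f₂.integrable _), h₁, h₂]
    | smul c f _ hf =>
      change ∫ x, c * f x ∂μ = ∫ x, c * f x ∂ν
      rw [integral_const_mul, integral_const_mul, hf]

variable {X Y : Type*} [TopologicalSpace X] [MeasurableSpace X] [TopologicalSpace Y]
  [MeasurableSpace Y]

theorem integral_eq_of_mapClusterPt_of_tendsto [OpensMeasurableSpace X] {α : Type*} {l : Filter α}
    {ν : α → ProbabilityMeasure X} {ρ : ProbabilityMeasure X} (hρ : MapClusterPt ρ l ν)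
    (f : X →ᵇ ℝ) {c : ℝ} (hc : Tendsto (fun n => ∫ x, f x ∂(ν n : Measure X)) l (𝓝 c)) :
    ∫ x, f x ∂(ρ : Measure X) = c :=
  eq_of_mapClusterPt_of_tendsto (hρ.tendsto_comp
    (ProbabilityMeasure.continuous_integral_boundedContinuousFunction f).continuousAt) hc

theorem tendsto_of_tendsto_map_of_isInducing [BorelSpace X] [BorelSpace Y]
    [HasOuterApproxClosed Y] {g : X → Y} (hg : IsInducing g) {ν : ℕ → ProbabilityMeasure X}
    {ρ : ProbabilityMeasure X}
    (h : Tendsto (fun n => (ν n).map hg.continuous.measurable.aemeasurable) atTop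
      (𝓝 (ρ.map hg.continuous.measurable.aemeasurable))) : Tendsto ν atTop (𝓝 ρ) := by
  refine tendsto_of_forall_isOpen_le_liminf' fun G hG => ?_
  obtain ⟨V, hV, rfl⟩ := hg.isOpen_iff.1 hG
  simpa only [ProbabilityMeasure.toMeasure_map,
    Measure.map_apply hg.continuous.measurable hV.measurableSet] using
      ProbabilityMeasure.le_liminf_measure_open_of_tendsto h hV

end WeakConvergence

section ExpLinear

open unitInterval BoundedContinuousFunction

variable {E : Type*}

/-- The exponential `p ↦ exp (∑ aᵢ pᵢ)` of a finite linear functional. These functions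
are convex and closed under multiplication, and their integrals determine a measure. -/
noncomputable def expLinear (a : E →₀ ℝ) (p : E → ℝ) : ℝ := Real.exp (a.sum fun i c => c * p i)

theorem continuous_expLinear (a : E →₀ ℝ) : Continuous (expLinear a) := by
  unfold expLinear Finsupp.sum
  fun_prop

theorem expLinear_zero (p : E → ℝ) : expLinear 0 p = 1 := by simp [expLinear]

theorem expLinear_add (a b : E →₀ ℝ) (p : E → ℝ) :
    expLinear (a + b) p = expLinear a p * expLinear b p := by
  rw [expLinear, expLinear, expLinear, ← Real.exp_add,
    Finsupp.sum_add_index' (by simp) (by intros; ring)]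

/-- The restriction of `expLinear a` to the compact cube `[0,1]^E`. -/
noncomputable def cubeExp (a : E →₀ ℝ) : (E → I) →ᵇ ℝ :=
  .mkOfCompact ⟨fun x => expLinear a fun i => x i, (continuous_expLinear a).comp <| by fun_prop⟩

theorem cube_measure_ext [Countable E] {μ ν : Measure (E → I)} [IsFiniteMeasure μ]
    [IsFiniteMeasure ν] (h : ∀ a, ∫ x, cubeExp a x ∂μ = ∫ x, cubeExp a x ∂ν) : μ = ν := by
  let S : Submonoid ((E → I) →ᵇ ℝ) :=
    { carrier := Set.range cubeExp
      one_mem' := ⟨0, by ext x; exact expLinear_zero _⟩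
      mul_mem' := by
        rintro _ _ ⟨a, rfl⟩ ⟨b, rfl⟩
        exact ⟨a + b, by ext x; exact expLinear_add a b _⟩ }
  refine ext_of_forall_mem_submonoid_integral_eq S (fun x y hxy => ?_)
    (Set.forall_mem_range.2 h)
  obtain ⟨i, hi⟩ := Function.ne_iff.1 hxy
  refine ⟨_, ⟨Finsupp.single i 1, rfl⟩, ?_⟩
  change expLinear _ _ ≠ expLinear _ _
  simpa [expLinear, Subtype.ext_iff] using hi

end ExpLinear

namespace ProbVec

open unitInterval BoundedContinuousFunction

variable {E : Type*}

/-- The embedding of `P(E)` into the compact cube `[0,1]^E`. -/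
def toCube (μ : ProbVec E) : E → I := fun i => ⟨μ.1 i, μ.nonneg i, μ.le_one i⟩

theorem isEmbedding_toCube : IsEmbedding (toCube : ProbVec E → E → I) := by
  have hcont : Continuous (toCube : ProbVec E → E → I) :=
    continuous_pi fun i => (continuous_coord i).subtype_mk _
  exact IsEmbedding.subtypeVal.of_comp hcont (g := fun x i => (x i : ℝ)) (by fun_prop)

theorem range_toCube :
    Set.range (toCube : ProbVec E → E → I) = {x | ∑' i, ENNReal.ofReal (x i) = 1} := by
  ext x
  refine ⟨?_, fun hx => ?_⟩
  · rintro ⟨μ, rfl⟩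
    rw [Set.mem_ofPred_eq, ← ENNReal.ofReal_one, ← μ.tsum_eq_one,
      ENNReal.ofReal_tsum_of_nonneg μ.nonneg μ.summable]
    rfl
  · rw [Set.mem_ofPred_eq] at hx
    have hsum := ENNReal.hasSum_toReal (hx.trans_ne one_ne_top)
    rw [← ENNReal.tsum_toReal_eq fun i => ofReal_ne_top, hx, toReal_one] at hsum
    simp only [ENNReal.toReal_ofReal (x _).2.1] at hsum
    exact ⟨⟨fun i => x i, fun i => (x i).2.1, hsum⟩, rfl⟩

theorem measurable_cube_coord (i : E) : Measurable fun x : E → I => (x i : ℝ) :=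
  measurable_subtype_coe.comp (measurable_pi_apply i)

variable [Countable E]

theorem measurableEmbedding_toCube : MeasurableEmbedding (toCube : ProbVec E → E → I) := by
  refine isEmbedding_toCube.measurableEmbedding ?_
  rw [range_toCube]
  exact measurableSet_eq_fun
    (Measurable.tsum fun i => (measurable_cube_coord i).ennreal_ofReal) measurable_const

/-- The image of a probability measure on `P(E)` in the compact space of probability measures on the
cube `[0,1]^E`. -/
noncomputable def pushCube (ν : ProbabilityMeasure (ProbVec E)) : ProbabilityMeasure (E → I) :=
  ν.map isEmbedding_toCube.continuous.measurable.aemeasurable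

theorem integral_pushCube (ν : ProbabilityMeasure (ProbVec E)) (f : (E → I) → ℝ) :
    ∫ x, f x ∂(pushCube ν : Measure (E → I)) =
      ∫ μ, f (toCube μ) ∂(ν : Measure (ProbVec E)) :=
  measurableEmbedding_toCube.integral_map f

theorem tendsto_of_tendsto_expLinear {ν : ℕ → ProbabilityMeasure (ProbVec E)}
    {ρ : ProbabilityMeasure (ProbVec E)}
    (h : ∀ a, Tendsto (fun n => ∫ μ, expLinear a μ.1 ∂(ν n : Measure (ProbVec E))) atTop
      (𝓝 (∫ μ, expLinear a μ.1 ∂(ρ : Measure (ProbVec E))))) : Tendsto ν atTop (𝓝 ρ) := by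
  refine tendsto_of_tendsto_map_of_isInducing isEmbedding_toCube.isInducing
    (tendsto_nhds_of_unique_mapClusterPt (f := fun n => pushCube (ν n)) fun Q hQ => ?_)
  have hexp (a : E →₀ ℝ) : ∫ x, cubeExp a x ∂(Q : Measure (E → I)) =
      ∫ x, cubeExp a x ∂(pushCube ρ : Measure (E → I)) := by
    refine integral_eq_of_mapClusterPt_of_tendsto hQ _ ?_
    simp_rw [integral_pushCube]
    exact h a
  have hmeas : (Q : Measure (E → I)) = pushCube ρ := cube_measure_ext hexp
  exact Subtype.ext hmeas

theorem ae_sum_le_one_of_mapClusterPt {ν : ℕ → ProbabilityMeasure (ProbVec E)}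
    {Q : ProbabilityMeasure (E → I)} (hQ : MapClusterPt Q atTop fun n => pushCube (ν n))
    (s : Finset E) : ∀ᵐ x ∂(Q : Measure (E → I)), ∑ i ∈ s, (x i : ℝ) ≤ 1 := by
  let excess : (E → I) →ᵇ ℝ := .mkOfCompact ⟨fun x => max (∑ i ∈ s, (x i : ℝ) - 1) 0, by fun_prop⟩
  have hν (n) : ∫ x, excess x ∂(pushCube (ν n) : Measure (E → I)) = 0 := by
    rw [integral_pushCube]
    refine integral_eq_zero_of_ae (.of_forall fun μ => max_eq_right (sub_nonpos.2 ?_))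
    exact sum_le_hasSum s (fun i _ => μ.nonneg i) μ.hasSum
  have hzero : ∫ x, excess x ∂(Q : Measure (E → I)) = 0 :=
    integral_eq_of_mapClusterPt_of_tendsto hQ excess (by simp only [hν, tendsto_const_nhds])
  filter_upwards [(integral_eq_zero_iff_of_nonneg (fun x => le_max_right _ _)
    (excess.integrable _)).1 hzero] with x hx
  exact sub_nonpos.1 (max_eq_right_iff.1 hx)

theorem ae_mem_range_toCube {Q : Measure (E → I)} [IsProbabilityMeasure Q] {b : ProbVec E}
    (hb : ∀ i, ∫ x, (x i : ℝ) ∂Q = b.1 i)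
    (hle : ∀ s : Finset E, ∀ᵐ x ∂Q, ∑ i ∈ s, (x i : ℝ) ≤ 1) :
    ∀ᵐ x ∂Q, x ∈ Set.range (toCube : ProbVec E → E → I) := by
  have hle' : (fun x : E → I => ∑' i, ENNReal.ofReal (x i)) ≤ᵐ[Q] fun _ => 1 := by
    filter_upwards [ae_all_iff.2 hle] with x hx
    refine ENNReal.summable.tsum_le_of_sum_le fun s => ?_
    rw [← ENNReal.ofReal_sum_of_nonneg fun i _ => (x i).2.1]
    exact ENNReal.ofReal_le_one.2 (hx s)
  have hlint : ∫⁻ x, ∑' i, ENNReal.ofReal (x i) ∂Q = 1 := by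
    rw [lintegral_tsum fun i => (measurable_cube_coord i).ennreal_ofReal.aemeasurable,
      ← ENNReal.ofReal_one, ← b.tsum_eq_one, ENNReal.ofReal_tsum_of_nonneg b.nonneg b.summable]
    refine tsum_congr fun i => ?_
    rw [← hb i, ofReal_integral_eq_lintegral_ofReal _ (.of_forall fun x => (x i).2.1)]
    exact .of_bound (measurable_cube_coord i).aestronglyMeasurable 1 (.of_forall fun x =>
      (Real.norm_of_nonneg (x i).2.1).trans_le (x i).2.2)
  rw [range_toCube]
  exact ae_eq_of_ae_le_of_lintegral_le hle' (by simp [hlint]) aemeasurable_const (by simp [hlint])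

-- A cluster point on the cube has barycenter `b`, of total mass `1`, so no mass can escape.
theorem exists_tendsto_of_tendsto_expLinear {ν : ℕ → ProbabilityMeasure (ProbVec E)}
    {b : ProbVec E} (hb : ∀ n i, ∫ μ, μ.1 i ∂(ν n : Measure (ProbVec E)) = b.1 i)
    (h : ∀ a, ∃ c, Tendsto (fun n => ∫ μ, expLinear a μ.1 ∂(ν n : Measure (ProbVec E))) atTop
      (𝓝 c)) : ∃ ρ, Tendsto ν atTop (𝓝 ρ) := by
  obtain ⟨Q, hQ⟩ : ∃ Q, MapClusterPt Q atTop fun n => pushCube (ν n) :=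
    exists_clusterPt_of_compactSpace _
  have hcoord (i : E) : ∫ x, (x i : ℝ) ∂(Q : Measure (E → I)) = b.1 i := by
    refine integral_eq_of_mapClusterPt_of_tendsto hQ
      (.mkOfCompact ⟨fun x => (x i : ℝ), by fun_prop⟩) (tendsto_const_nhds.congr fun n => ?_)
    rw [integral_pushCube]
    exact (hb n i).symm
  have hrange := ae_mem_range_toCube hcoord (ae_sum_le_one_of_mapClusterPt hQ)
  have hprob := measurableEmbedding_toCube.isProbabilityMeasure_comap hrange
  have hmap : (Measure.comap toCube (Q : Measure (E → I))).map toCube = Q := by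
    rw [measurableEmbedding_toCube.map_comap, Measure.restrict_eq_self_of_ae_mem hrange]
  refine ⟨⟨_, hprob⟩, tendsto_of_tendsto_expLinear fun a => ?_⟩
  obtain ⟨c, hc⟩ := h a
  have hQc : ∫ x, cubeExp a x ∂(Q : Measure (E → I)) = c := by
    refine integral_eq_of_mapClusterPt_of_tendsto hQ _ ?_
    simp_rw [integral_pushCube]
    exact hc
  rw [← hmap, measurableEmbedding_toCube.integral_map] at hQc
  rw [← hQc] at hc
  exact hc

end ProbVec

section NonnegSeries

variable {Ω ι : Type*} [MeasurableSpace Ω] {m : Measure Ω} {G : ι → Ω → ℝ}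

theorem lintegral_ofReal_tsum_of_nonneg [Countable ι] (h0 : ∀ i y, 0 ≤ G i y)
    (hm : ∀ i, Measurable (G i)) (hp : ∀ y, Summable fun i => G i y) :
    ∫⁻ y, ENNReal.ofReal (∑' i, G i y) ∂m = ∑' i, ∫⁻ y, ENNReal.ofReal (G i y) ∂m := by
  rw [← lintegral_tsum fun i => (hm i).ennreal_ofReal.aemeasurable]
  exact lintegral_congr fun y => ENNReal.ofReal_tsum_of_nonneg (fun i => h0 i y) (hp y)

theorem integrable_tsum_iff_of_nonneg [Countable ι] (h0 : ∀ i y, 0 ≤ G i y)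
    (hm : ∀ i, Measurable (G i)) (hp : ∀ y, Summable fun i => G i y) :
    Integrable (fun y => ∑' i, G i y) m ↔
      (∀ i, Integrable (G i) m) ∧ Summable fun i => ∫ y, G i y ∂m := by
  have hint {f : Ω → ℝ} (hf : Measurable f) (hf0 : ∀ y, 0 ≤ f y) :
      Integrable f m ↔ ∫⁻ y, ENNReal.ofReal (f y) ∂m ≠ ∞ :=
    (lintegral_ofReal_ne_top_iff_integrable hf.aestronglyMeasurable (.of_forall hf0)).symm
  rw [hint (.tsum hm) fun y => tsum_nonneg (h0 · y), lintegral_ofReal_tsum_of_nonneg h0 hm hp]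
  simp only [hint (hm _) (h0 _),
    integral_eq_lintegral_of_nonneg_ae (.of_forall (h0 _)) (hm _).aestronglyMeasurable]
  exact ⟨fun h => ⟨ENNReal.ne_top_of_tsum_ne_top h, ENNReal.summable_toReal h⟩,
    fun h => by
      simpa only [ENNReal.ofReal_toReal (h.1 _)] using h.2.tsum_ofReal_ne_top⟩

theorem hasSum_integral_of_integrable_tsum [Countable ι] (h0 : ∀ i y, 0 ≤ G i y)
    (hm : ∀ i, Measurable (G i)) (hp : ∀ y, Summable fun i => G i y)
    (h : Integrable (fun y => ∑' i, G i y) m) :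
    HasSum (fun i => ∫ y, G i y ∂m) (∫ y, ∑' i, G i y ∂m) := by
  obtain ⟨hi, hs⟩ := (integrable_tsum_iff_of_nonneg h0 hm hp).1 h
  refine hasSum_integral_of_summable_integral_norm hi ?_
  simpa only [Real.norm_of_nonneg (h0 _ _)] using hs

end NonnegSeries

section PushDensity

variable {Ω X : Type*} [MeasurableSpace Ω] [MeasurableSpace X] {m : Measure Ω} {w : Ω → ℝ}
  {g : Ω → X}

/-- The law of `g` under the measure with density `w` with respect to `m`. -/
noncomputable def pushDensity (m : Measure Ω) (w : Ω → ℝ) (g : Ω → X) : Measure X :=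
  (m.withDensity fun y => ENNReal.ofReal (w y)).map g

theorem isProbabilityMeasure_pushDensity (hw : Integrable w m) (hw0 : ∀ y, 0 ≤ w y)
    (hone : ∫ y, w y ∂m = 1) (hg : Measurable g) : IsProbabilityMeasure (pushDensity m w g) := by
  have : IsProbabilityMeasure (m.withDensity fun y => ENNReal.ofReal (w y)) := by
    refine ⟨?_⟩
    rw [withDensity_apply _ .univ, Measure.restrict_univ,
      ← ofReal_integral_eq_lintegral_ofReal hw (.of_forall hw0), hone, ENNReal.ofReal_one]
  exact Measure.isProbabilityMeasure_map hg.aemeasurable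

theorem integral_pushDensity (hw : Measurable w) (hw0 : ∀ y, 0 ≤ w y) (hg : Measurable g)
    {f : X → ℝ} (hf : Measurable f) :
    ∫ x, f x ∂(pushDensity m w g) = ∫ y, f (g y) * w y ∂m := by
  rw [pushDensity, integral_map hg.aemeasurable hf.aestronglyMeasurable,
    integral_withDensity_eq_integral_toReal_smul hw.ennreal_ofReal
      (.of_forall fun _ => ofReal_lt_top)]
  simp only [ENNReal.toReal_ofReal (hw0 _), smul_eq_mul, mul_comm]

end PushDensity

namespace IsBddCont

variable {E : Type*} {f : ProbVec E → ℝ}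

theorem const (c : ℝ) : IsBddCont fun _ : ProbVec E => c :=
  ⟨continuous_const, |c|, fun _ => le_rfl⟩

theorem coord (i : E) : IsBddCont fun μ : ProbVec E => μ.1 i :=
  ⟨ProbVec.continuous_coord i, 1, fun μ => (abs_of_nonneg (μ.nonneg i)).trans_le (μ.le_one i)⟩

theorem tsum_mul {g : E → ℝ} {C : ℝ} (hg : ∀ i, |g i| ≤ C) :
    IsBddCont fun μ : ProbVec E => ∑' i, μ.1 i * g i := by
  refine ⟨ProbVec.continuous_tsum_mul hg, C, fun μ => ?_⟩
  rw [← Real.norm_eq_abs]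
  refine tsum_of_norm_bounded (one_mul C ▸ μ.hasSum.mul_right C) fun i => ?_
  rw [norm_mul, Real.norm_of_nonneg (μ.nonneg i)]
  exact mul_le_mul_of_nonneg_left (hg i) (μ.nonneg i)

theorem expLinear (a : E →₀ ℝ) : IsBddCont fun μ : ProbVec E => expLinear a μ.1 := by
  have hbdd := (cubeExp a).norm_coe_le_norm
  exact ⟨(continuous_expLinear a).comp continuous_subtype_val, ‖cubeExp a‖,
    fun μ => hbdd (ProbVec.toCube μ)⟩

variable [Countable E]

theorem integrable (hf : IsBddCont f) (ν : Measure (ProbVec E)) [IsFiniteMeasure ν] :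
    Integrable f ν := by
  obtain ⟨hcont, C, hC⟩ := hf
  exact .of_bound hcont.measurable.aestronglyMeasurable C (.of_forall hC)

theorem tendsto_integral (hf : IsBddCont f) {ν : ℕ → ProbabilityMeasure (ProbVec E)}
    {ρ : ProbabilityMeasure (ProbVec E)} (h : Tendsto ν atTop (𝓝 ρ)) :
    Tendsto (fun n => ∫ μ, f μ ∂(ν n : Measure (ProbVec E))) atTop
      (𝓝 (∫ μ, f μ ∂(ρ : Measure (ProbVec E)))) := by
  obtain ⟨hcont, C, hC⟩ := hf
  exact ProbabilityMeasure.tendsto_iff_forall_integral_tendsto.1 h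
    (.ofNormedAddCommGroup f hcont C hC)

end IsBddCont

section Barycenter

open ProbVec

variable {E : Type*} [Countable E]

theorem hasSum_integral_coord (ν : ProbabilityMeasure (ProbVec E)) :
    HasSum (fun i => ∫ μ, μ.1 i ∂(ν : Measure (ProbVec E))) 1 := by
  have h := hasSum_integral_of_integrable_tsum (m := (ν : Measure (ProbVec E)))
    (G := fun (i : E) μ => μ.1 i) (fun i μ => μ.nonneg i) measurable_coord ProbVec.summable
    (by simp only [tsum_eq_one, integrable_const])
  simpa only [tsum_eq_one, integral_const, probReal_univ, one_smul] using h

/-- The barycenter `∫ μ ν(dμ) ∈ P(E)` of a probability measure `ν` on `P(E)`. -/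
noncomputable def bary (ν : ProbabilityMeasure (ProbVec E)) : ProbVec E :=
  ⟨fun i => ∫ μ, μ.1 i ∂(ν : Measure (ProbVec E)), fun i => integral_nonneg fun μ => μ.nonneg i,
    hasSum_integral_coord ν⟩

theorem integral_tsum_mul (ν : ProbabilityMeasure (ProbVec E)) {g : E → ℝ} {C : ℝ}
    (hg : ∀ i, |g i| ≤ C) :
    ∫ μ, ∑' i, μ.1 i * g i ∂(ν : Measure (ProbVec E)) = ∑' i, (bary ν).1 i * g i := by
  have hi (i : E) : Integrable (fun μ : ProbVec E => μ.1 i * g i) (ν : Measure (ProbVec E)) :=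
    ((IsBddCont.coord i).integrable _).mul_const _
  have hnorm (i : E) : ∫ μ : ProbVec E, ‖μ.1 i * g i‖ ∂(ν : Measure (ProbVec E)) =
      (bary ν).1 i * |g i| := by
    simp_rw [norm_mul, Real.norm_of_nonneg (nonneg _ i), integral_mul_const, Real.norm_eq_abs]
    rfl
  have hsum : Summable fun i => ∫ μ : ProbVec E, ‖μ.1 i * g i‖ ∂(ν : Measure (ProbVec E)) := by
    simp_rw [hnorm]
    exact summable_mul (bary ν) (C := C) fun i => (abs_abs _).trans_le (hg i)
  rw [← (hasSum_integral_of_summable_integral_norm hi hsum).tsum_eq]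
  simp_rw [integral_mul_const]
  rfl

theorem bary_diracProba (μ : ProbVec E) : bary (diracProba μ) = μ :=
  ProbVec.ext fun _ => integral_dirac _ _

variable [DecidableEq E]

/-- The mixture `∑ mᵢ δ_{eᵢ}` of the point masses at the vertices `eᵢ` of `P(E)`: the most
spread out measure with barycenter `m`. -/
noncomputable def vertexMixture (m : ProbVec E) : ProbabilityMeasure (ProbVec E) := by
  refine ⟨Measure.sum fun i => ENNReal.ofReal (m.1 i) • Measure.dirac (vertex i), ⟨?_⟩⟩
  rw [Measure.sum_apply _ .univ]
  simp only [Measure.smul_apply, measure_univ, smul_eq_mul, mul_one]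
  rw [← ENNReal.ofReal_tsum_of_nonneg m.nonneg m.summable, m.tsum_eq_one, ENNReal.ofReal_one]

theorem integral_vertexMixture (m : ProbVec E) {f : ProbVec E → ℝ} (hf : IsBddCont f) :
    ∫ μ, f μ ∂(vertexMixture m : Measure (ProbVec E)) = ∑' i, m.1 i * f (vertex i) := by
  have hi := hf.integrable (vertexMixture m : Measure (ProbVec E))
  refine (integral_sum_measure hi).trans (tsum_congr fun i => ?_)
  rw [integral_smul_measure, integral_dirac, ENNReal.toReal_ofReal (m.nonneg i), smul_eq_mul]

theorem bary_vertexMixture (m : ProbVec E) : bary (vertexMixture m) = m := by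
  refine ProbVec.ext fun j => (integral_vertexMixture m (.coord j)).trans ?_
  rw [tsum_eq_single j fun i hi => ?_]
  · simp [vertex]
  · simp [vertex, hi]

end Barycenter

/-- Convexity of a function on `P(E)`, in the form of Jensen's inequality for arbitrary
probability measures on `P(E)`. -/
def IsBaryConvex {E : Type*} [Countable E] (f : ProbVec E → ℝ) : Prop :=
  ∀ ν : ProbabilityMeasure (ProbVec E), f (bary ν) ≤ ∫ μ, f μ ∂(ν : Measure (ProbVec E))

namespace IsBaryConvex

open ProbVec

variable {E : Type*} [Countable E] {f : ProbVec E → ℝ}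

theorem expLinear (a : E →₀ ℝ) : IsBaryConvex fun μ : ProbVec E => expLinear a μ.1 := by
  intro ν
  have hi : Integrable (fun μ : ProbVec E => a.sum fun i c => c * μ.1 i)
      (ν : Measure (ProbVec E)) :=
    integrable_finsetSum _ fun i _ => ((IsBddCont.coord i).integrable _).const_mul _
  have hmean : (a.sum fun i c => c * (bary ν).1 i) =
      ∫ μ : ProbVec E, (a.sum fun i c => c * μ.1 i) ∂(ν : Measure (ProbVec E)) := by
    unfold Finsupp.sum
    rw [integral_finsetSum _ fun i _ => ((IsBddCont.coord i).integrable _).const_mul _]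
    simp_rw [integral_const_mul]
    rfl
  change Real.exp (a.sum fun i c => c * (bary ν).1 i) ≤ _
  rw [hmean]
  exact convexOn_exp.map_integral_le Real.continuous_exp.continuousOn isClosed_univ
    (.of_forall fun _ => Set.mem_univ _) hi ((IsBddCont.expLinear a).integrable _)

-- Jensen's inequality for the law of `g` under the normalised density `w / ∫ w`.
theorem mul_integral_le {Ω : Type*} [MeasurableSpace Ω] {m : Measure Ω} (hc : IsBaryConvex f)
    (hf : Measurable f) {w : Ω → ℝ} (hw : Measurable w) (hwi : Integrable w m) (hw0 : ∀ x, 0 ≤ w x)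
    {g : Ω → ProbVec E} (hg : Measurable g) {q : ProbVec E}
    (hq : ∀ j, q.1 j * ∫ x, w x ∂m = ∫ x, (g x).1 j * w x ∂m) :
    f q * ∫ x, w x ∂m ≤ ∫ x, f (g x) * w x ∂m := by
  rcases (integral_nonneg (μ := m) (f := w) hw0).eq_or_lt with hzero | hpos
  · have hw_ae : w =ᵐ[m] 0 := (integral_eq_zero_iff_of_nonneg hw0 hwi).1 hzero.symm
    rw [← hzero, mul_zero, integral_eq_zero_of_ae]
    filter_upwards [hw_ae] with x hx
    simp only [hx, Pi.zero_apply, mul_zero]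
  set c := ∫ x, w x ∂m
  have hwc0 (x : Ω) : 0 ≤ w x / c := div_nonneg (hw0 x) hpos.le
  have hint (h : ProbVec E → ℝ) (hh : Measurable h) :
      ∫ μ, h μ ∂(pushDensity m (fun x => w x / c) g) = (∫ x, h (g x) * w x ∂m) / c := by
    simp_rw [integral_pushDensity (hw.div_const c) hwc0 hg hh, ← mul_div_assoc, integral_div]
  let ν : ProbabilityMeasure (ProbVec E) := ⟨_, isProbabilityMeasure_pushDensity
    (hwi.div_const c) hwc0 ((integral_div _ _).trans (div_self hpos.ne')) hg⟩
  have hbary : bary ν = q := ProbVec.ext fun j => by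
    refine (hint _ (measurable_coord j)).trans ?_
    rw [← hq, mul_div_cancel_right₀ _ hpos.ne']
  rw [← le_div_iff₀ hpos, ← hint f hf, ← hbary]
  exact hc ν

theorem le_tsum_vertex [DecidableEq E] (hc : IsBaryConvex f) (hf : IsBddCont f) (μ : ProbVec E) :
    f μ ≤ ∑' i, μ.1 i * f (vertex i) := by
  have h := hc (vertexMixture μ)
  rwa [bary_vertexMixture, integral_vertexMixture μ hf] at h

theorem integral_le_tsum_vertex [DecidableEq E] (hc : IsBaryConvex f) (hf : IsBddCont f)
    (ν : ProbabilityMeasure (ProbVec E)) :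
    ∫ μ, f μ ∂(ν : Measure (ProbVec E)) ≤ ∑' i, (bary ν).1 i * f (vertex i) := by
  obtain ⟨C, hC⟩ := hf.2
  have hg (i : E) : |f (vertex i)| ≤ C := hC _
  rw [← integral_tsum_mul ν hg]
  refine integral_mono (hf.integrable _) ?_ (hc.le_tsum_vertex hf)
  exact (IsBddCont.tsum_mul hg).integrable _

end IsBaryConvex

theorem IsStochastic.hasSum_prod_mul {E : Type*} {P : E → E → ℝ} (hP : IsStochastic P) {w : E → ℝ}
    {s : ℝ} (hw : ∀ i, 0 ≤ w i) (hs : HasSum w s) :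
    HasSum (fun x : E × E => w x.1 * P x.1 x.2) s := by
  have hrow (i : E) : HasSum (fun j => w i * P i j) (w i) := by
    simpa only [mul_one] using (hP.hasSum i).mul_left (w i)
  have h := summable_uncurry_of_nonneg (fun i j => mul_nonneg (hw i) (hP.nonneg i j)) hrow
    hs.summable
  exact (h.hasSum.prod_fiberwise hrow).unique hs ▸ h.hasSum

section ObservationModel

variable {E F : Type*}

/-- The density `μM(y)1` of the observation when the signal has law `μ`. -/
noncomputable def obsDensity (M : F → E → E → ℝ) (μ : ProbVec E) (y : F) : ℝ :=
  rowTot (rowMul M μ.1 y)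

/-- The filter update, set to `μ` where `obsDensity M μ y = 0`: unlike `filterStep`, whose value
there is an arbitrary choice, it is jointly measurable. -/
noncomputable def posterior (M : F → E → E → ℝ) (μ : ProbVec E) (y : F) : ProbVec E :=
  if 0 < obsDensity M μ y then filterStep M μ y else μ

variable [MeasurableSpace F]

/-- The standing assumptions on the observation matrices: measurable nonnegative entries and,
for every observation, uniformly bounded row sums. -/
structure IsObservationModel (M : F → E → E → ℝ) : Prop where
  measurable : ∀ i j, Measurable fun y => M y i j
  nonneg : ∀ y i j, 0 ≤ M y i j
  exists_sum_le : ∀ y, ∃ C : ℝ, ∀ (i : E) (s : Finset E), ∑ j ∈ s, M y i j ≤ C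

namespace IsObservationModel

open ProbVec

variable {M : F → E → E → ℝ}

theorem hasSum_row (hM : IsObservationModel M) (y : F) (i : E) :
    HasSum (M y i) (rowTot (M y i)) := by
  obtain ⟨C, hC⟩ := hM.exists_sum_le y
  exact (summable_of_sum_le (hM.nonneg y i) (hC i)).hasSum

theorem exists_abs_rowTot_le (hM : IsObservationModel M) (y : F) :
    ∃ C, ∀ i, |rowTot (M y i)| ≤ C := by
  obtain ⟨C, hC⟩ := hM.exists_sum_le y
  refine ⟨C, fun i => ?_⟩
  rw [abs_of_nonneg (a := rowTot (M y i)) (tsum_nonneg (hM.nonneg y i))]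
  exact (hM.hasSum_row y i).summable.tsum_le_of_sum_le (hC i)

theorem abs_le_abs_rowTot (hM : IsObservationModel M) (y : F) (i j : E) :
    |M y i j| ≤ |rowTot (M y i)| :=
  abs_le_abs_of_nonneg (hM.nonneg y i j)
    (le_hasSum (hM.hasSum_row y i) j fun k _ => hM.nonneg y i k)

section Weights

variable {w : E → ℝ}

theorem summable_prod_mul (hM : IsObservationModel M) (hw : ∀ i, 0 ≤ w i) (hs : Summable w)
    (y : F) : Summable fun x : E × E => w x.1 * M y x.1 x.2 := by
  obtain ⟨C, hC⟩ := hM.exists_abs_rowTot_le y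
  refine summable_uncurry_of_nonneg (fun i j => mul_nonneg (hw i) (hM.nonneg y i j))
    (fun i => (hM.hasSum_row y i).mul_left (w i)) ?_
  refine .of_norm_bounded (hs.mul_right C) fun i => ?_
  rw [norm_mul, Real.norm_of_nonneg (hw i)]
  exact mul_le_mul_of_nonneg_left (hC i) (hw i)

theorem hasSum_mul_rowTot (hM : IsObservationModel M) (hw : ∀ i, 0 ≤ w i) (hs : Summable w)
    (y : F) : HasSum (fun i => w i * rowTot (M y i)) (∑' x : E × E, w x.1 * M y x.1 x.2) :=
  (hM.summable_prod_mul hw hs y).hasSum.prod_fiberwise fun i => (hM.hasSum_row y i).mul_left (w i)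

end Weights

theorem rowMul_nonneg (hM : IsObservationModel M) (μ : ProbVec E) (y : F) (j : E) :
    0 ≤ rowMul M μ.1 y j :=
  tsum_nonneg fun i => mul_nonneg (μ.nonneg i) (hM.nonneg y i j)

theorem obsDensity_nonneg (hM : IsObservationModel M) (μ : ProbVec E) (y : F) :
    0 ≤ obsDensity M μ y :=
  tsum_nonneg (hM.rowMul_nonneg μ y)

theorem summable_column (hM : IsObservationModel M) (μ : ProbVec E) (y : F) (j : E) :
    Summable fun i => μ.1 i * M y i j :=
  (hM.summable_prod_mul μ.nonneg μ.summable y).comp_injective (i := fun i => (i, j))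
    fun _ _ h => congrArg Prod.fst h

theorem hasSum_rowMul (hM : IsObservationModel M) (μ : ProbVec E) (y : F) :
    HasSum (rowMul M μ.1 y) (obsDensity M μ y) :=
  ((hM.summable_prod_mul μ.nonneg μ.summable y).prod_symm.prod).hasSum

theorem obsDensity_eq_tsum_prod (hM : IsObservationModel M) (μ : ProbVec E) (y : F) :
    obsDensity M μ y = ∑' x : E × E, μ.1 x.1 * M y x.1 x.2 :=
  ((hM.summable_prod_mul μ.nonneg μ.summable y).prod_symm.tsum_prod' (hM.summable_column μ y)).symm
    |>.trans ((Equiv.prodComm E E).tsum_eq fun x : E × E => μ.1 x.1 * M y x.1 x.2)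

theorem obsDensity_eq_tsum (hM : IsObservationModel M) (μ : ProbVec E) (y : F) :
    obsDensity M μ y = ∑' i, μ.1 i * rowTot (M y i) :=
  (hM.obsDensity_eq_tsum_prod μ y).trans (hM.hasSum_mul_rowTot μ.nonneg μ.summable y).tsum_eq.symm

theorem rowMul_le_obsDensity (hM : IsObservationModel M) (μ : ProbVec E) (y : F) (j : E) :
    rowMul M μ.1 y j ≤ obsDensity M μ y :=
  le_hasSum (hM.hasSum_rowMul μ y) j fun k _ => hM.rowMul_nonneg μ y k

theorem filterStep_mul_obsDensity (hM : IsObservationModel M) (μ : ProbVec E) (y : F) (j : E) :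
    (filterStep M μ y).1 j * obsDensity M μ y = rowMul M μ.1 y j := by
  have hex : ∃ ν : ProbVec E, ∀ j, ν.1 j * obsDensity M μ y = rowMul M μ.1 y j := by
    have hsum := hM.hasSum_rowMul μ y
    by_cases h : obsDensity M μ y = 0
    · rw [h, hasSum_zero_iff_of_nonneg (hM.rowMul_nonneg μ y)] at hsum
      exact ⟨μ, fun j => by rw [h, mul_zero, hsum, Pi.zero_apply]⟩
    · refine ⟨⟨fun j => rowMul M μ.1 y j / obsDensity M μ y, fun j =>
        div_nonneg (hM.rowMul_nonneg μ y j) (hM.obsDensity_nonneg μ y), ?_⟩, fun j =>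
        div_mul_cancel₀ _ h⟩
      simpa only [div_self h] using hsum.div_const (obsDensity M μ y)
  unfold obsDensity at hex ⊢
  rw [filterStep, dif_pos hex]
  exact hex.choose_spec j

theorem apply_posterior_mul_obsDensity (hM : IsObservationModel M) (f : ProbVec E → ℝ)
    (μ : ProbVec E) (y : F) :
    f (posterior M μ y) * obsDensity M μ y = f (filterStep M μ y) * obsDensity M μ y := by
  unfold posterior
  split_ifs with h
  · rfl
  · rw [le_antisymm (not_lt.1 h) (hM.obsDensity_nonneg μ y), mul_zero, mul_zero]

theorem posterior_mul_obsDensity (hM : IsObservationModel M) (μ : ProbVec E) (y : F) (j : E) :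
    (posterior M μ y).1 j * obsDensity M μ y = rowMul M μ.1 y j :=
  (hM.apply_posterior_mul_obsDensity (fun ν => ν.1 j) μ y).trans
    (hM.filterStep_mul_obsDensity μ y j)

theorem posterior_coord_eq_div (hM : IsObservationModel M) {μ : ProbVec E} {y : F}
    (h : 0 < obsDensity M μ y) (j : E) :
    (posterior M μ y).1 j = rowMul M μ.1 y j / obsDensity M μ y :=
  eq_div_of_mul_eq h.ne' (hM.posterior_mul_obsDensity μ y j)

theorem filterKernel_eq (hM : IsObservationModel M) (φ : Measure F) (f : ProbVec E → ℝ)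
    (μ : ProbVec E) :
    filterKernel M φ f μ = ∫ y, f (posterior M μ y) * obsDensity M μ y ∂φ := by
  simp_rw [hM.apply_posterior_mul_obsDensity]
  rfl

theorem isBddCont_obsDensity (hM : IsObservationModel M) (y : F) :
    IsBddCont fun μ => obsDensity M μ y := by
  obtain ⟨C, hC⟩ := hM.exists_abs_rowTot_le y
  simpa only [hM.obsDensity_eq_tsum] using IsBddCont.tsum_mul hC

theorem isBddCont_rowMul (hM : IsObservationModel M) (y : F) (j : E) :
    IsBddCont fun μ : ProbVec E => rowMul M μ.1 y j := by
  obtain ⟨C, hC⟩ := hM.exists_abs_rowTot_le y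
  exact .tsum_mul fun i => (hM.abs_le_abs_rowTot y i j).trans (hC i)

theorem continuousAt_posterior (hM : IsObservationModel M) {μ : ProbVec E} {y : F}
    (h : 0 < obsDensity M μ y) : ContinuousAt (fun ν => posterior M ν y) μ := by
  have hdens := (hM.isBddCont_obsDensity y).1.continuousAt (x := μ)
  refine tendsto_nhds_iff.2 fun j => ?_
  rw [hM.posterior_coord_eq_div h]
  refine ((hM.isBddCont_rowMul y j).1.continuousAt.div hdens h.ne').congr' ?_
  filter_upwards [hdens.eventually (lt_mem_nhds h)] with ν hν
  exact (hM.posterior_coord_eq_div hν j).symm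

theorem continuousAt_apply_posterior_mul (hM : IsObservationModel M) {f : ProbVec E → ℝ}
    (hf : Continuous f) (μ : ProbVec E) (y : F) :
    ContinuousAt (fun p => f (posterior M p y) * obsDensity M μ y) μ := by
  rcases (hM.obsDensity_nonneg μ y).eq_or_lt with h0 | hpos
  · simpa only [← h0, mul_zero] using continuousAt_const
  · exact (hf.continuousAt.comp (hM.continuousAt_posterior hpos)).mul continuousAt_const

section Measurability

variable [Countable E]

theorem measurable_rowMul (hM : IsObservationModel M) (j : E) :
    Measurable fun z : ProbVec E × F => rowMul M z.1.1 z.2 j :=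
  .tsum fun i => ((measurable_coord i).comp measurable_fst).mul
    ((hM.measurable i j).comp measurable_snd)

theorem measurable_obsDensity (hM : IsObservationModel M) :
    Measurable fun z : ProbVec E × F => obsDensity M z.1 z.2 :=
  .tsum hM.measurable_rowMul

theorem measurable_posterior (hM : IsObservationModel M) :
    Measurable fun z : ProbVec E × F => posterior M z.1 z.2 := by
  refine measurable_iff.2 fun j => ?_
  have hcoord : (fun z : ProbVec E × F => (posterior M z.1 z.2).1 j) = fun z =>
      if 0 < obsDensity M z.1 z.2 then rowMul M z.1.1 z.2 j / obsDensity M z.1 z.2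
      else z.1.1 j := by
    ext z
    split_ifs with h
    · exact hM.posterior_coord_eq_div h j
    · rw [posterior, if_neg h]
  rw [hcoord]
  exact .ite (measurableSet_lt measurable_const hM.measurable_obsDensity)
    ((hM.measurable_rowMul j).div hM.measurable_obsDensity)
    ((measurable_coord j).comp measurable_fst)

end Measurability

section Barycenter

variable [Countable E]

theorem rowMul_bary (hM : IsObservationModel M) (ν : ProbabilityMeasure (ProbVec E)) (y : F)
    (j : E) : rowMul M (bary ν).1 y j = ∫ μ, rowMul M μ.1 y j ∂(ν : Measure (ProbVec E)) := by
  obtain ⟨C, hC⟩ := hM.exists_abs_rowTot_le y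
  exact (integral_tsum_mul ν fun i => (hM.abs_le_abs_rowTot y i j).trans (hC i)).symm

theorem obsDensity_bary (hM : IsObservationModel M) (ν : ProbabilityMeasure (ProbVec E)) (y : F) :
    obsDensity M (bary ν) y = ∫ μ, obsDensity M μ y ∂(ν : Measure (ProbVec E)) := by
  obtain ⟨C, hC⟩ := hM.exists_abs_rowTot_le y
  simp_rw [hM.obsDensity_eq_tsum]
  exact (integral_tsum_mul ν hC).symm

theorem apply_posterior_bary_mul_le (hM : IsObservationModel M) {f : ProbVec E → ℝ}
    (hc : IsBaryConvex f) (hf : Measurable f) (ν : ProbabilityMeasure (ProbVec E)) (y : F) :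
    f (posterior M (bary ν) y) * obsDensity M (bary ν) y ≤
      ∫ μ, f (posterior M μ y) * obsDensity M μ y ∂(ν : Measure (ProbVec E)) := by
  have hdens := hM.isBddCont_obsDensity y
  have hpost := hM.measurable_posterior.comp (measurable_prodMk_right (y := y))
  rw [hM.obsDensity_bary]
  refine hc.mul_integral_le hf hdens.1.measurable (hdens.integrable _)
    (fun μ => hM.obsDensity_nonneg μ y) hpost fun j => ?_
  rw [← hM.obsDensity_bary, hM.posterior_mul_obsDensity, hM.rowMul_bary]
  exact integral_congr_ae (.of_forall fun μ => (hM.posterior_mul_obsDensity μ y j).symm)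

end Barycenter

section Integrals

variable {φ : Measure F}

theorem isStochastic_transMat (hM : IsObservationModel M)
    (hsum : ∀ i, HasSum (transMat M φ i) 1) : IsStochastic (transMat M φ) :=
  ⟨fun i j => integral_nonneg fun y => hM.nonneg y i j, hsum⟩

theorem hasSum_integral_prod_mul (hM : IsObservationModel M)
    (hsum : ∀ i, HasSum (transMat M φ i) 1) {w : E → ℝ} {s : ℝ} (hw : ∀ i, 0 ≤ w i)
    (hs : HasSum w s) : HasSum (fun x : E × E => ∫ y, w x.1 * M y x.1 x.2 ∂φ) s := by
  simp_rw [integral_const_mul]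
  exact (hM.isStochastic_transMat hsum).hasSum_prod_mul hw hs

variable [Countable E]

theorem integrable_tsum_prod_mul_iff (hM : IsObservationModel M)
    (hsum : ∀ i, HasSum (transMat M φ i) 1) {w : E → ℝ} (hw : ∀ i, 0 ≤ w i) (hs : Summable w) :
    Integrable (fun y => ∑' x : E × E, w x.1 * M y x.1 x.2) φ ↔
      ∀ i, 0 < w i → ∀ j, Integrable (fun y => M y i j) φ := by
  rw [integrable_tsum_iff_of_nonneg (G := fun (x : E × E) y => w x.1 * M y x.1 x.2)
    (fun x y => mul_nonneg (hw x.1) (hM.nonneg y x.1 x.2))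
    (fun x => (hM.measurable x.1 x.2).const_mul _) (hM.summable_prod_mul hw hs)]
  simp only [(hM.hasSum_integral_prod_mul hsum hw hs.hasSum).summable, and_true, Prod.forall]
  refine forall_congr' fun i => ⟨fun h hi j => ?_, fun h j => ?_⟩
  · exact (integrable_const_mul_iff hi.ne'.isUnit _).1 (h j)
  · rcases (hw i).eq_or_lt with h0 | hi
    · simp [← h0]
    · exact (h hi j).const_mul _

theorem integral_tsum_prod_mul (hM : IsObservationModel M)
    (hsum : ∀ i, HasSum (transMat M φ i) 1) {w : E → ℝ} {s : ℝ} (hw : ∀ i, 0 ≤ w i)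
    (hs : HasSum w s) (hint : Integrable (fun y => ∑' x : E × E, w x.1 * M y x.1 x.2) φ) :
    ∫ y, ∑' x : E × E, w x.1 * M y x.1 x.2 ∂φ = s :=
  (hasSum_integral_of_integrable_tsum (G := fun (x : E × E) y => w x.1 * M y x.1 x.2)
    (fun x y => mul_nonneg (hw x.1) (hM.nonneg y x.1 x.2))
    (fun x => (hM.measurable x.1 x.2).const_mul _) (hM.summable_prod_mul hw hs.summable)
    hint).unique (hM.hasSum_integral_prod_mul hsum hw hs)

theorem integrable_obsDensity_iff (hM : IsObservationModel M)
    (hsum : ∀ i, HasSum (transMat M φ i) 1) (μ : ProbVec E) :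
    Integrable (obsDensity M μ) φ ↔ ∀ i, 0 < μ.1 i → ∀ j, Integrable (fun y => M y i j) φ := by
  rw [← hM.integrable_tsum_prod_mul_iff hsum μ.nonneg μ.summable]
  simp_rw [← hM.obsDensity_eq_tsum_prod]

theorem integral_obsDensity_eq_one (hM : IsObservationModel M)
    (hsum : ∀ i, HasSum (transMat M φ i) 1) {μ : ProbVec E}
    (hint : Integrable (obsDensity M μ) φ) : ∫ y, obsDensity M μ y ∂φ = 1 := by
  have hint' : Integrable (fun y => obsDensity M μ y) φ := hint
  simp_rw [hM.obsDensity_eq_tsum_prod] at hint' ⊢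
  exact hM.integral_tsum_prod_mul hsum μ.nonneg μ.hasSum hint'

theorem filterKernel_coord (hM : IsObservationModel M) (hsum : ∀ i, HasSum (transMat M φ i) 1)
    {μ : ProbVec E} (hint : Integrable (obsDensity M μ) φ) (j : E) :
    filterKernel M φ (fun ν => ν.1 j) μ = ((hM.isStochastic_transMat hsum).step μ).1 j := by
  have hrow : Integrable (fun y => rowMul M μ.1 y j) φ :=
    hint.mono' ((hM.measurable_rowMul j).comp measurable_prodMk_left).aestronglyMeasurable
      (.of_forall fun y => (Real.norm_of_nonneg (hM.rowMul_nonneg μ y j)).trans_le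
        (hM.rowMul_le_obsDensity μ y j))
  have hterms := hasSum_integral_of_integrable_tsum (m := φ) (G := fun i y => μ.1 i * M y i j)
    (fun i y => mul_nonneg (μ.nonneg i) (hM.nonneg y i j))
    (fun i => (hM.measurable i j).const_mul _) (fun y => hM.summable_column μ y j) hrow
  simp_rw [integral_const_mul] at hterms
  refine Eq.trans (integral_congr_ae (.of_forall fun y => ?_)) hterms.tsum_eq.symm
  exact hM.filterStep_mul_obsDensity μ y j

end Integrals

end IsObservationModel

end ObservationModel

section FilterModel

variable {E F : Type*} [MeasurableSpace F]

/-- An observation model whose kernels are integrable and integrate to a stochastic matrix `P`, so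
that `μM(y)1 φ(dy)` is a probability measure for every `μ ∈ P(E)`. Integrability is required
explicitly, since a nonintegrable entry would have the junk integral `P i j = 0`. -/
structure IsFilterModel (M : F → E → E → ℝ) (φ : Measure F) : Prop
    extends IsObservationModel M where
  integrable : ∀ i j, Integrable (fun y => M y i j) φ
  hasSum_transMat : ∀ i, HasSum (transMat M φ i) 1

namespace IsFilterModel

open ProbVec

variable {M : F → E → E → ℝ} {φ : Measure F} {f : ProbVec E → ℝ} {C : ℝ}

theorem isStochastic (hM : IsFilterModel M φ) : IsStochastic (transMat M φ) :=
  hM.isStochastic_transMat hM.hasSum_transMat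

variable [Countable E]

theorem integrable_obsDensity (hM : IsFilterModel M φ) (μ : ProbVec E) :
    Integrable (obsDensity M μ) φ :=
  (hM.integrable_obsDensity_iff hM.hasSum_transMat μ).2 fun i _ j => hM.integrable i j

theorem integral_obsDensity (hM : IsFilterModel M φ) (μ : ProbVec E) :
    ∫ y, obsDensity M μ y ∂φ = 1 :=
  hM.integral_obsDensity_eq_one hM.hasSum_transMat (hM.integrable_obsDensity μ)

theorem integral_abs_obsDensity_sub_le (hM : IsFilterModel M φ) (p q : ProbVec E) :
    ∫ y, |obsDensity M p y - obsDensity M q y| ∂φ ≤ l1Dist p q := by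
  have hw (i : E) : 0 ≤ |p.1 i - q.1 i| := abs_nonneg _
  have hs := summable_abs_sub p q
  have hint := (hM.integrable_tsum_prod_mul_iff hM.hasSum_transMat hw hs).2
    fun i _ j => hM.integrable i j
  refine (integral_mono ?_ hint fun y => ?_).trans_eq
    (hM.integral_tsum_prod_mul hM.hasSum_transMat hw hs.hasSum hint)
  · exact ((hM.integrable_obsDensity p).sub (hM.integrable_obsDensity q)).abs
  obtain ⟨C, hC⟩ := hM.exists_abs_rowTot_le y
  simp only [hM.obsDensity_eq_tsum]
  rw [← (p.summable_mul hC).tsum_sub (q.summable_mul hC), ← Real.norm_eq_abs]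
  refine tsum_of_norm_bounded (hM.hasSum_mul_rowTot hw hs y) fun i => ?_
  rw [← sub_mul, norm_mul, Real.norm_eq_abs, Real.norm_of_nonneg (r := rowTot _)]
  exact tsum_nonneg (hM.nonneg y i)

theorem integrable_apply_posterior_mul (hM : IsFilterModel M φ) (hf : Measurable f)
    (hC : ∀ μ, |f μ| ≤ C) (p : ProbVec E) {w : F → ℝ} (hw : Integrable w φ) :
    Integrable (fun y => f (posterior M p y) * w y) φ :=
  hw.bdd_mul ((hf.comp hM.measurable_posterior).comp measurable_prodMk_left).aestronglyMeasurable
    (.of_forall fun _ => hC _)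

theorem abs_filterKernel_le (hM : IsFilterModel M φ) (hC : ∀ μ, |f μ| ≤ C) (μ : ProbVec E) :
    |filterKernel M φ f μ| ≤ C := by
  have hbound := norm_integral_le_of_norm_le ((hM.integrable_obsDensity μ).const_mul C)
    (f := fun y => f (filterStep M μ y) * obsDensity M μ y) (.of_forall fun y => by
      rw [norm_mul, Real.norm_of_nonneg (hM.obsDensity_nonneg μ y)]
      exact mul_le_mul_of_nonneg_right (hC _) (hM.obsDensity_nonneg μ y))
  rwa [integral_const_mul, hM.integral_obsDensity, mul_one] at hbound

theorem norm_integral_apply_posterior_mul_sub_le (hM : IsFilterModel M φ) (hC : ∀ μ, |f μ| ≤ C)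
    (p q : ProbVec E) :
    ‖∫ y, f (posterior M p y) * (obsDensity M p y - obsDensity M q y) ∂φ‖ ≤ C * l1Dist p q := by
  have hdiff := ((hM.integrable_obsDensity p).sub (hM.integrable_obsDensity q)).abs
  refine (norm_integral_le_of_norm_le (hdiff.const_mul C) (.of_forall fun y => ?_)).trans ?_
  · rw [norm_mul]
    exact mul_le_mul_of_nonneg_right (hC _) (norm_nonneg _)
  · rw [integral_const_mul]
    exact mul_le_mul_of_nonneg_left (hM.integral_abs_obsDensity_sub_le p q)
      ((abs_nonneg _).trans (hC p))

theorem tendsto_integral_apply_posterior_mul (hM : IsFilterModel M φ) (hf : IsBddCont f)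
    (μ : ProbVec E) :
    Tendsto (fun p => ∫ y, f (posterior M p y) * obsDensity M μ y ∂φ) (𝓝 μ)
      (𝓝 (∫ y, f (posterior M μ y) * obsDensity M μ y ∂φ)) := by
  obtain ⟨hcont, C, hC⟩ := hf
  have hint := hM.integrable_obsDensity μ
  refine tendsto_integral_filter_of_dominated_convergence (fun y => C * obsDensity M μ y)
    (.of_forall fun p =>
      (hM.integrable_apply_posterior_mul hcont.measurable hC p hint).aestronglyMeasurable)
    (.of_forall fun p => .of_forall fun y => ?_) (hint.const_mul C)
    (.of_forall fun y => hM.continuousAt_apply_posterior_mul hcont μ y)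
  rw [norm_mul, Real.norm_of_nonneg (hM.obsDensity_nonneg μ y)]
  exact mul_le_mul_of_nonneg_right (hC _) (hM.obsDensity_nonneg μ y)

theorem continuous_filterKernel (hM : IsFilterModel M φ) (hf : IsBddCont f) :
    Continuous (filterKernel M φ f) := by
  refine continuous_iff_continuousAt.2 fun μ => ?_
  have hmain := hM.tendsto_integral_apply_posterior_mul hf μ
  obtain ⟨hcont, C, hC⟩ := hf
  have hint (p) {w : F → ℝ} := hM.integrable_apply_posterior_mul hcont.measurable hC p (w := w)
  have herror : Tendsto
      (fun p => ∫ y, f (posterior M p y) * (obsDensity M p y - obsDensity M μ y) ∂φ) (𝓝 μ)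
      (𝓝 0) :=
    squeeze_zero_norm (fun p => hM.norm_integral_apply_posterior_mul_sub_le hC p μ)
      (by simpa using (tendsto_l1Dist tendsto_id).const_mul C)
  have hsum := hmain.add herror
  rw [add_zero, ← hM.filterKernel_eq] at hsum
  refine hsum.congr fun p => ?_
  have hdiff : Integrable (fun y => obsDensity M p y - obsDensity M μ y) φ :=
    (hM.integrable_obsDensity p).sub (hM.integrable_obsDensity μ)
  rw [hM.filterKernel_eq, ← integral_add (hint p (hM.integrable_obsDensity μ)) (hint p hdiff)]
  simp only [← mul_add, add_sub_cancel]

theorem isBddCont_filterKernel (hM : IsFilterModel M φ) (hf : IsBddCont f) :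
    IsBddCont (filterKernel M φ f) :=
  ⟨hM.continuous_filterKernel hf, hf.2.imp fun _ => hM.abs_filterKernel_le⟩

theorem isBddCont_iterate_filterKernel (hM : IsFilterModel M φ) (hf : IsBddCont f) (n : ℕ) :
    IsBddCont ((filterKernel M φ)^[n] f) := by
  induction n with
  | zero => exact hf
  | succ n ih => exact Function.iterate_succ_apply' (filterKernel M φ) n f ▸
      hM.isBddCont_filterKernel ih

theorem abs_iterate_filterKernel_le (hM : IsFilterModel M φ) (hC : ∀ μ, |f μ| ≤ C) (n : ℕ) :
    ∀ μ, |(filterKernel M φ)^[n] f μ| ≤ C := by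
  induction n with
  | zero => exact hC
  | succ n ih =>
    rw [Function.iterate_succ_apply']
    exact hM.abs_filterKernel_le ih

theorem exists_tendsto_integral_iterate_filterKernel (hM : IsFilterModel M φ)
    (ν : ProbabilityMeasure (ProbVec E)) (hf : IsBddCont f)
    (h : Monotone (fun n => ∫ μ, (filterKernel M φ)^[n] f μ ∂(ν : Measure (ProbVec E))) ∨
      Antitone fun n => ∫ μ, (filterKernel M φ)^[n] f μ ∂(ν : Measure (ProbVec E))) :
    ∃ c, Tendsto (fun n => ∫ μ, (filterKernel M φ)^[n] f μ ∂(ν : Measure (ProbVec E))) atTop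
      (𝓝 c) := by
  obtain ⟨C, hC⟩ := hf.2
  have hbdd (n : ℕ) : |∫ μ, (filterKernel M φ)^[n] f μ ∂(ν : Measure (ProbVec E))| ≤ C := by
    simpa using norm_integral_le_of_norm_le_const (μ := (ν : Measure (ProbVec E)))
      (f := (filterKernel M φ)^[n] f) (.of_forall (hM.abs_iterate_filterKernel_le hC n))
  rcases h with hmono | hanti
  · exact ⟨_, tendsto_atTop_ciSup hmono
      ⟨C, Set.forall_mem_range.2 fun n => (abs_le.1 (hbdd n)).2⟩⟩
  · exact ⟨_, tendsto_atTop_ciInf hanti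
      ⟨-C, Set.forall_mem_range.2 fun n => (abs_le.1 (hbdd n)).1⟩⟩

variable [SFinite φ]

theorem integrable_obsDensity_prod (hM : IsFilterModel M φ)
    (ν : ProbabilityMeasure (ProbVec E)) :
    Integrable (fun z : ProbVec E × F => obsDensity M z.1 z.2)
      ((ν : Measure (ProbVec E)).prod φ) := by
  refine (integrable_prod_iff hM.measurable_obsDensity.aestronglyMeasurable).2
    ⟨.of_forall hM.integrable_obsDensity, ?_⟩
  simp_rw [Real.norm_of_nonneg (hM.obsDensity_nonneg _ _), hM.integral_obsDensity]
  exact integrable_const _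

/-- The adjoint action of the filter kernel `Π` on measures: `ν ↦ νΠ`. -/
noncomputable def evolve (hM : IsFilterModel M φ) (ν : ProbabilityMeasure (ProbVec E)) :
    ProbabilityMeasure (ProbVec E) :=
  ⟨pushDensity ((ν : Measure (ProbVec E)).prod φ) (fun z => obsDensity M z.1 z.2)
      fun z => posterior M z.1 z.2,
    isProbabilityMeasure_pushDensity (hM.integrable_obsDensity_prod ν)
      (fun z => hM.obsDensity_nonneg z.1 z.2)
      (by simp [integral_prod _ (hM.integrable_obsDensity_prod ν), hM.integral_obsDensity])
      hM.measurable_posterior⟩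

theorem integrable_apply_posterior_mul_prod (hM : IsFilterModel M φ)
    (ν : ProbabilityMeasure (ProbVec E)) (hf : IsBddCont f) :
    Integrable (fun z : ProbVec E × F => f (posterior M z.1 z.2) * obsDensity M z.1 z.2)
      ((ν : Measure (ProbVec E)).prod φ) := by
  obtain ⟨hcont, C, hC⟩ := hf
  exact (hM.integrable_obsDensity_prod ν).bdd_mul
    (hcont.measurable.comp hM.measurable_posterior).aestronglyMeasurable (.of_forall fun _ => hC _)

theorem integral_evolve (hM : IsFilterModel M φ) (ν : ProbabilityMeasure (ProbVec E))
    (hf : IsBddCont f) :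
    ∫ μ, f μ ∂(hM.evolve ν : Measure (ProbVec E)) =
      ∫ μ, filterKernel M φ f μ ∂(ν : Measure (ProbVec E)) := by
  refine (integral_pushDensity hM.measurable_obsDensity (fun z => hM.obsDensity_nonneg z.1 z.2)
    hM.measurable_posterior hf.1.measurable).trans ?_
  rw [integral_prod _ (hM.integrable_apply_posterior_mul_prod ν hf)]
  simp_rw [hM.filterKernel_eq]

theorem integral_iterate_evolve (hM : IsFilterModel M φ) (ν : ProbabilityMeasure (ProbVec E))
    (hf : IsBddCont f) (n : ℕ) :
    ∫ μ, f μ ∂(hM.evolve^[n] ν : Measure (ProbVec E)) =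
      ∫ μ, (filterKernel M φ)^[n] f μ ∂(ν : Measure (ProbVec E)) := by
  induction n generalizing ν with
  | zero => rfl
  | succ n ih =>
    rw [Function.iterate_succ_apply, ih, Function.iterate_succ_apply',
      hM.integral_evolve ν (hM.isBddCont_iterate_filterKernel hf n)]

theorem bary_evolve (hM : IsFilterModel M φ) (ν : ProbabilityMeasure (ProbVec E)) :
    bary (hM.evolve ν) = hM.isStochastic.step (bary ν) := by
  refine ProbVec.ext fun j => (hM.integral_evolve ν (.coord j)).trans ?_
  simp_rw [hM.filterKernel_coord hM.hasSum_transMat (hM.integrable_obsDensity _) j]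
  exact integral_tsum_mul ν fun i => hM.isStochastic.abs_le_one i j

theorem bary_iterate_evolve (hM : IsFilterModel M φ) (ν : ProbabilityMeasure (ProbVec E))
    (n : ℕ) : bary (hM.evolve^[n] ν) = hM.isStochastic.step^[n] (bary ν) :=
  Function.Semiconj.iterate_right (f := bary) hM.bary_evolve n ν

end IsFilterModel

end FilterModel

section Convergence

theorem tendsto_of_tendsto_bounds {α : Type*} [TopologicalSpace α] [LinearOrder α]
    [OrderTopology α] {u : ℕ → α} {lo hi : ℕ → ℕ → α} {a b : ℕ → α} {L : α}
    (hlo : ∀ l k, lo l k ≤ u (k + l)) (hhi : ∀ l k, u (k + l) ≤ hi l k)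
    (ha : ∀ l, Tendsto (lo l) atTop (𝓝 (a l))) (hb : ∀ l, Tendsto (hi l) atTop (𝓝 (b l)))
    (haL : Tendsto a atTop (𝓝 L)) (hbL : Tendsto b atTop (𝓝 L)) : Tendsto u atTop (𝓝 L) := by
  refine tendsto_order.2 ⟨fun c hc => ?_, fun c hc => ?_⟩
  · obtain ⟨l, hl⟩ := (haL.eventually (lt_mem_nhds hc)).exists
    rw [← map_add_atTop_eq_nat l, eventually_map]
    exact ((ha l).eventually (lt_mem_nhds hl)).mono fun k hk => hk.trans_le (hlo l k)
  · obtain ⟨l, hl⟩ := (hbL.eventually (gt_mem_nhds hc)).exists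
    rw [← map_add_atTop_eq_nat l, eventually_map]
    exact ((hb l).eventually (gt_mem_nhds hl)).mono fun k hk => (hhi l k).trans_lt hk

variable {E F : Type*} [MeasurableSpace F]

namespace IsFilterModel

open ProbVec

variable [Countable E] {M : F → E → E → ℝ} {φ : Measure F} [SFinite φ] {f : ProbVec E → ℝ}

theorem isBaryConvex_filterKernel (hM : IsFilterModel M φ) (hf : IsBddCont f)
    (hc : IsBaryConvex f) : IsBaryConvex (filterKernel M φ f) := by
  intro ν
  obtain ⟨C, hC⟩ := hf.2
  have hint := hM.integrable_apply_posterior_mul_prod ν hf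
  simp_rw [hM.filterKernel_eq]
  rw [integral_integral_swap hint]
  exact integral_mono (hM.integrable_apply_posterior_mul hf.1.measurable hC _
      (hM.integrable_obsDensity _)) hint.integral_prod_right
    (hM.apply_posterior_bary_mul_le hc hf.1.measurable ν)

theorem isBaryConvex_iterate_filterKernel (hM : IsFilterModel M φ) (hf : IsBddCont f)
    (hc : IsBaryConvex f) (n : ℕ) : IsBaryConvex ((filterKernel M φ)^[n] f) := by
  induction n with
  | zero => exact hc
  | succ n ih => exact Function.iterate_succ_apply' (filterKernel M φ) n f ▸
      hM.isBaryConvex_filterKernel (hM.isBddCont_iterate_filterKernel hf n) ih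

variable {𝕄 : ProbabilityMeasure (ProbVec E)} {lam : ProbVec E}

theorem monotone_integral_iterate_filterKernel_diracProba (hM : IsFilterModel M φ)
    (hlam : hM.isStochastic.step lam = lam) (hf : IsBddCont f) (hc : IsBaryConvex f) :
    Monotone fun n => ∫ μ, (filterKernel M φ)^[n] f μ ∂(diracProba lam : Measure (ProbVec E)) := by
  refine monotone_nat_of_le_succ fun n => ?_
  have h := hM.isBaryConvex_iterate_filterKernel hf hc n (hM.evolve (diracProba lam))
  rw [hM.integral_evolve _ (hM.isBddCont_iterate_filterKernel hf n),
    ← Function.iterate_succ_apply' (filterKernel M φ), hM.bary_evolve, bary_diracProba, hlam] at h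
  exact (integral_dirac _ _).trans_le h

theorem antitone_integral_iterate_filterKernel_vertexMixture [DecidableEq E]
    (hM : IsFilterModel M φ) (hlam : hM.isStochastic.step lam = lam) (hf : IsBddCont f)
    (hc : IsBaryConvex f) : Antitone fun n =>
      ∫ μ, (filterKernel M φ)^[n] f μ ∂(vertexMixture lam : Measure (ProbVec E)) := by
  refine antitone_nat_of_succ_le fun n => ?_
  have hn := hM.isBddCont_iterate_filterKernel hf n
  have h := (hM.isBaryConvex_iterate_filterKernel hf hc n).integral_le_tsum_vertex hn
    (hM.evolve (vertexMixture lam))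
  rwa [hM.integral_evolve _ hn, ← Function.iterate_succ_apply' (filterKernel M φ), hM.bary_evolve,
    bary_vertexMixture, hlam, ← integral_vertexMixture _ hn] at h

theorem isPiInvariant_of_tendsto_iterate_evolve (hM : IsFilterModel M φ)
    {ν ρ : ProbabilityMeasure (ProbVec E)}
    (h : Tendsto (fun n => hM.evolve^[n] ν) atTop (𝓝 ρ)) : IsPiInvariant M φ ρ := by
  intro f hf
  have hshift := (hf.tendsto_integral h).comp (tendsto_add_atTop_nat 1)
  refine tendsto_nhds_unique ((hM.isBddCont_filterKernel hf).tendsto_integral h)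
    (hshift.congr fun n => ?_)
  rw [Function.comp_apply, Function.iterate_succ_apply', hM.integral_evolve _ hf]

theorem tendsto_iterate_evolve_of_tendsto_integral (hM : IsFilterModel M φ)
    (huniq : ∀ 𝕄', IsPiInvariant M φ 𝕄' → 𝕄' = 𝕄) {ν : ProbabilityMeasure (ProbVec E)}
    (hν : hM.isStochastic.step (bary ν) = bary ν)
    (h : ∀ f : ProbVec E → ℝ, IsBddCont f → IsBaryConvex f → ∃ c,
      Tendsto (fun n => ∫ μ, (filterKernel M φ)^[n] f μ ∂(ν : Measure (ProbVec E))) atTop (𝓝 c)) :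
    Tendsto (fun n => hM.evolve^[n] ν) atTop (𝓝 𝕄) := by
  have hbary (n : ℕ) : bary (hM.evolve^[n] ν) = bary ν := by
    rw [hM.bary_iterate_evolve, Function.iterate_fixed hν]
  obtain ⟨ρ, hρ⟩ := exists_tendsto_of_tendsto_expLinear
    (fun n i => congrArg (fun p : ProbVec E => p.1 i) (hbary n)) fun a => by
      simpa only [hM.integral_iterate_evolve ν (.expLinear a)] using
        h _ (.expLinear a) (.expLinear a)
  exact huniq ρ (hM.isPiInvariant_of_tendsto_iterate_evolve hρ) ▸ hρ

theorem tendsto_iterate_evolve_diracProba (hM : IsFilterModel M φ)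
    (huniq : ∀ 𝕄', IsPiInvariant M φ 𝕄' → 𝕄' = 𝕄) (hlam : hM.isStochastic.step lam = lam) :
    Tendsto (fun n => hM.evolve^[n] (diracProba lam)) atTop (𝓝 𝕄) :=
  hM.tendsto_iterate_evolve_of_tendsto_integral huniq (by rwa [bary_diracProba]) fun _ hf hc =>
    hM.exists_tendsto_integral_iterate_filterKernel _ hf
      (.inl (hM.monotone_integral_iterate_filterKernel_diracProba hlam hf hc))

theorem tendsto_iterate_evolve_vertexMixture [DecidableEq E] (hM : IsFilterModel M φ)
    (huniq : ∀ 𝕄', IsPiInvariant M φ 𝕄' → 𝕄' = 𝕄) (hlam : hM.isStochastic.step lam = lam) :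
    Tendsto (fun n => hM.evolve^[n] (vertexMixture lam)) atTop (𝓝 𝕄) :=
  hM.tendsto_iterate_evolve_of_tendsto_integral huniq (by rwa [bary_vertexMixture]) fun _ hf hc =>
    hM.exists_tendsto_integral_iterate_filterKernel _ hf
      (.inr (hM.antitone_integral_iterate_filterKernel_vertexMixture hlam hf hc))

theorem tendsto_integral_iterate_evolve_of_isBaryConvex (hM : IsFilterModel M φ)
    (huniq : ∀ 𝕄', IsPiInvariant M φ 𝕄' → 𝕄' = 𝕄) (hlam : hM.isStochastic.step lam = lam)
    {ν : ProbabilityMeasure (ProbVec E)}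
    (hν : Tendsto (fun k => hM.isStochastic.step^[k] (bary ν)) atTop (𝓝 lam)) (hf : IsBddCont f)
    (hc : IsBaryConvex f) :
    Tendsto (fun n => ∫ μ, f μ ∂(hM.evolve^[n] ν : Measure (ProbVec E))) atTop
      (𝓝 (∫ μ, f μ ∂(𝕄 : Measure (ProbVec E)))) := by
  classical
  have hiter := hM.isBddCont_iterate_filterKernel hf
  have hconv := hM.isBaryConvex_iterate_filterKernel hf hc
  have hsplit (l k : ℕ) : ∫ μ, f μ ∂(hM.evolve^[k + l] ν : Measure (ProbVec E)) =
      ∫ μ, (filterKernel M φ)^[l] f μ ∂(hM.evolve^[k] ν : Measure (ProbVec E)) := by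
    rw [add_comm, Function.iterate_add_apply, hM.integral_iterate_evolve _ hf]
  have hlower := hf.tendsto_integral (hM.tendsto_iterate_evolve_diracProba huniq hlam)
  have hupper := hf.tendsto_integral (hM.tendsto_iterate_evolve_vertexMixture huniq hlam)
  simp only [hM.integral_iterate_evolve _ hf] at hlower hupper
  refine tendsto_of_tendsto_bounds
    (lo := fun l k => (filterKernel M φ)^[l] f (hM.isStochastic.step^[k] (bary ν)))
    (hi := fun l k => ∑' i,
      (hM.isStochastic.step^[k] (bary ν)).1 i * (filterKernel M φ)^[l] f (vertex i))
    (fun l k => ?_) (fun l k => ?_) (fun l => ((hiter l).1.tendsto lam).comp hν) (fun l => ?_)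
    (hlower.congr fun l => integral_dirac _ _)
    (hupper.congr fun l => integral_vertexMixture lam (hiter l))
  · rw [hsplit, ← hM.bary_iterate_evolve]
    exact hconv l _
  · rw [hsplit, ← hM.bary_iterate_evolve]
    exact (hconv l).integral_le_tsum_vertex (hiter l) _
  · obtain ⟨C, hC⟩ := (hiter l).2
    exact ((continuous_tsum_mul fun i => hC (vertex i)).tendsto lam).comp hν

theorem tendsto_iterate_evolve (hM : IsFilterModel M φ)
    (huniq : ∀ 𝕄', IsPiInvariant M φ 𝕄' → 𝕄' = 𝕄) (hlam : hM.isStochastic.step lam = lam)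
    {ν : ProbabilityMeasure (ProbVec E)}
    (hν : Tendsto (fun k => hM.isStochastic.step^[k] (bary ν)) atTop (𝓝 lam)) :
    Tendsto (fun n => hM.evolve^[n] ν) atTop (𝓝 𝕄) :=
  tendsto_of_tendsto_expLinear fun a =>
    hM.tendsto_integral_iterate_evolve_of_isBaryConvex huniq hlam hν (.expLinear a) (.expLinear a)

end IsFilterModel

end Convergence

section Invariance

variable {E F : Type*} [MeasurableSpace F]

namespace IsObservationModel

variable [Countable E] {M : F → E → E → ℝ} {φ : Measure F} {𝕄 : ProbabilityMeasure (ProbVec E)}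

-- A nonintegrable density has the junk integral `0`, which invariance of the constant `1` excludes.
theorem ae_integrable_obsDensity (hM : IsObservationModel M)
    (hsum : ∀ i, HasSum (transMat M φ i) 1) (h𝕄 : IsPiInvariant M φ 𝕄) :
    ∀ᵐ μ ∂(𝕄 : Measure (ProbVec E)), Integrable (obsDensity M μ) φ := by
  have hone (μ : ProbVec E) : filterKernel M φ (fun _ => 1) μ = ∫ y, obsDensity M μ y ∂φ := by
    simp only [filterKernel, one_mul, obsDensity]
  have hle (μ : ProbVec E) : 0 ≤ 1 - ∫ y, obsDensity M μ y ∂φ := by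
    by_cases h : Integrable (obsDensity M μ) φ
    · rw [hM.integral_obsDensity_eq_one hsum h, sub_self]
    · rw [integral_undef h, sub_zero]
      exact zero_le_one
  have hmean : ∫ μ, ∫ y, obsDensity M μ y ∂φ ∂(𝕄 : Measure (ProbVec E)) = 1 := by
    simpa [hone] using h𝕄 _ (.const 1)
  have hint := not_imp_comm.1 integral_undef (hmean.trans_ne one_ne_zero)
  have hdefect : ∫ μ, (1 - ∫ y, obsDensity M μ y ∂φ) ∂(𝕄 : Measure (ProbVec E)) = 0 := by
    rw [integral_sub (integrable_const 1) hint, hmean]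
    simp
  have hae := (integral_eq_zero_iff_of_nonneg hle ((integrable_const 1).sub hint)).1 hdefect
  filter_upwards [hae] with μ hμ
  exact not_imp_comm.1 integral_undef fun h => by simp [h] at hμ

theorem step_bary_of_isPiInvariant (hM : IsObservationModel M)
    (hsum : ∀ i, HasSum (transMat M φ i) 1) (h𝕄 : IsPiInvariant M φ 𝕄) :
    (hM.isStochastic_transMat hsum).step (bary 𝕄) = bary 𝕄 := by
  refine ProbVec.ext fun j => ?_
  refine (integral_tsum_mul 𝕄 fun i => (hM.isStochastic_transMat hsum).abs_le_one i j).symm.trans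
    (.trans (integral_congr_ae ?_) (h𝕄 _ (.coord j)))
  filter_upwards [hM.ae_integrable_obsDensity hsum h𝕄] with μ hμ
  exact (hM.filterKernel_coord hsum hμ j).symm

theorem isFilterModel_of_isPiInvariant [DecidableEq E] (hM : IsObservationModel M)
    (hsum : ∀ i, HasSum (transMat M φ i) 1)
    (hirr : ∀ i j, ∃ n, 0 < matPow (transMat M φ) n i j) (h𝕄 : IsPiInvariant M φ 𝕄) :
    IsFilterModel M φ := by
  refine ⟨hM, fun i j => ?_, hsum⟩
  have hpos : 0 < (bary 𝕄).1 i := (hM.isStochastic_transMat hsum).pos_of_step_eq_self hirr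
    (hM.step_bary_of_isPiInvariant hsum h𝕄) i
  obtain ⟨μ, hint, hμ⟩ : ∃ μ : ProbVec E, Integrable (obsDensity M μ) φ ∧ 0 < μ.1 i := by
    by_contra! hnone
    refine hpos.ne' (integral_eq_zero_of_ae ?_)
    filter_upwards [hM.ae_integrable_obsDensity hsum h𝕄] with μ hμ
    exact le_antisymm (hnone μ hμ) (μ.nonneg i)
  exact (hM.integrable_obsDensity_iff hsum μ).1 hint i hμ j

end IsObservationModel

variable {M M' : F → E → E → ℝ} {φ : Measure F}

theorem exists_isObservationModel_ae_eq (hmeas : ∀ i j, Measurable fun y => M y i j)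
    (hnn : ∀ y i j, 0 ≤ M y i j)
    (hbd : ∀ᵐ y ∂φ, ∃ C : ℝ, ∀ (i : E) (s : Finset E), ∑ j ∈ s, M y i j ≤ C) :
    ∃ M', IsObservationModel M' ∧ M' =ᵐ[φ] M := by
  obtain ⟨S, hS, hSmeas, hSbd⟩ := hbd.exists_measurable_mem
  refine ⟨S.indicator M, ⟨fun i j => ?_, fun y i j => ?_, fun y => ?_⟩, ?_⟩
  · convert (hmeas i j).indicator hSmeas using 2 with y
    by_cases hy : y ∈ S <;> simp [hy]
  · by_cases hy : y ∈ S
    · simpa only [Set.indicator_of_mem hy] using hnn y i j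
    · simp only [Set.indicator_of_notMem hy, Pi.zero_apply, le_refl]
  · by_cases hy : y ∈ S
    · simpa only [Set.indicator_of_mem hy] using hSbd y hy
    · exact ⟨0, fun i s => by simp [Set.indicator_of_notMem hy]⟩
  · filter_upwards [hS] with y hy
    exact Set.indicator_of_mem hy M

theorem transMat_congr_ae (h : M' =ᵐ[φ] M) : transMat M' φ = transMat M φ :=
  funext₂ fun i j => integral_congr_ae (h.mono fun _ hy => congrFun₂ hy i j)

theorem filterKernel_congr_ae (h : M' =ᵐ[φ] M) : filterKernel M' φ = filterKernel M φ := by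
  refine funext₂ fun f μ => integral_congr_ae (h.mono fun y hy => ?_)
  have hrow : rowMul M' μ.1 y = rowMul M μ.1 y := by
    unfold rowMul
    rw [hy]
  have hstep : filterStep M' μ y = filterStep M μ y := by
    unfold filterStep
    rw [hrow]
  simp only [hrow, hstep]

theorem isPiInvariant_congr_ae (h : M' =ᵐ[φ] M) : IsPiInvariant M' φ = IsPiInvariant M φ := by
  unfold IsPiInvariant
  rw [filterKernel_congr_ae h]

end Invariance

theorem convergence_to_unique_invariant_measure_of_aperiodic_general
    {E : Type*} [Countable E] [DecidableEq E] {F : Type*} [MeasurableSpace F]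
    (φ : Measure F) [SFinite φ] (M : F → E → E → ℝ)
    (hMmeas : ∀ i j, Measurable fun y => M y i j)
    (hMnn : ∀ y i j, 0 ≤ M y i j)
    (hMbd : ∀ᵐ y ∂φ, ∃ C : ℝ, ∀ (i : E) (s : Finset E), ∑ j ∈ s, M y i j ≤ C)
    (hPtrans : ∀ i, HasSum (fun j => transMat M φ i j) 1)
    (hPirr : ∀ i j : E, ∃ n : ℕ, 0 < matPow (transMat M φ) n i j)
    (hAper : ∀ i : E, ∃ N : ℕ, ∀ n ≥ N, 0 < matPow (transMat M φ) n i i)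
    (𝕄 : ProbabilityMeasure (ProbVec E)) (h𝕄 : IsPiInvariant M φ 𝕄)
    (huniq : ∀ 𝕄' : ProbabilityMeasure (ProbVec E), IsPiInvariant M φ 𝕄' → 𝕄' = 𝕄)
    (𝕄₀ : ProbabilityMeasure (ProbVec E)) (f : ProbVec E → ℝ) (hf : IsBddCont f) :
    Tendsto (fun n : ℕ => ∫ μ, ((filterKernel M φ)^[n] f) μ ∂(𝕄₀ : Measure (ProbVec E)))
      atTop (𝓝 (∫ μ, f μ ∂(𝕄 : Measure (ProbVec E)))) := by
  obtain ⟨M', hM', hae⟩ := exists_isObservationModel_ae_eq hMmeas hMnn hMbd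
  rw [← transMat_congr_ae hae] at hPtrans hPirr hAper
  rw [← isPiInvariant_congr_ae hae] at h𝕄 huniq
  have hmodel := hM'.isFilterModel_of_isPiInvariant hPtrans hPirr h𝕄
  have hstat := hM'.step_bary_of_isPiInvariant hPtrans h𝕄
  have hchain := hmodel.isStochastic.tendsto_iterate_step hPirr
    (fun i => eventually_atTop.2 (hAper i)) hstat (bary 𝕄₀)
  have hlaw := hf.tendsto_integral (hmodel.tendsto_iterate_evolve huniq hstat hchain)
  simpa only [hmodel.integral_iterate_evolve 𝕄₀ hf, filterKernel_congr_ae hae] using hlaw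

/-- If the signal transition matrix is aperiodic and the filter transition kernel `Π`
has a unique invariant probability measure `𝕄`, then the law of the filter converges
weakly to `𝕄`: `∫ Π^n f d𝕄₀ → ∫ f d𝕄` for every bounded continuous `f`. -/
theorem convergence_to_unique_invariant_measure_of_aperiodic
    {E : Type*} [Countable E] [Nonempty E] [DecidableEq E]
    {F : Type*} [TopologicalSpace F] [PolishSpace F] [MeasurableSpace F] [BorelSpace F]
    (φ : Measure F) [SigmaFinite φ]
    (M : F → E → E → ℝ)
    (hMmeas : ∀ i j, Measurable fun y => M y i j)
    (hMnn : ∀ y i j, 0 ≤ M y i j)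
    (hMbd : ∀ᵐ y ∂φ, ∃ C : ℝ, ∀ (i : E) (s : Finset E), ∑ j ∈ s, M y i j ≤ C)
    (hPtrans : ∀ i, HasSum (fun j => transMat M φ i j) 1)
    (hPirr : ∀ i j : E, ∃ n : ℕ, 0 < matPow (transMat M φ) n i j)
    (lam : ProbVec E)
    (hlamInv : ∀ j, ∑' i, (lam : E → ℝ) i * transMat M φ i j = (lam : E → ℝ) j)
    (hlamUniq : ∀ ρ : ProbVec E,
      (∀ j, ∑' i, (ρ : E → ℝ) i * transMat M φ i j = (ρ : E → ℝ) j) → ρ = lam)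
    (hAper : ∀ i : E, ∃ N : ℕ, ∀ n ≥ N, 0 < matPow (transMat M φ) n i i)
    (𝕄 : ProbabilityMeasure (ProbVec E)) (h𝕄 : IsPiInvariant M φ 𝕄)
    (huniq : ∀ 𝕄' : ProbabilityMeasure (ProbVec E), IsPiInvariant M φ 𝕄' → 𝕄' = 𝕄) :
    ∀ (𝕄₀ : ProbabilityMeasure (ProbVec E)) (f : ProbVec E → ℝ), IsBddCont f →
      Tendsto (fun n : ℕ => ∫ μ, ((filterKernel M φ)^[n] f) μ ∂(𝕄₀ : Measure (ProbVec E)))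
        atTop (nhds (∫ μ, f μ ∂(𝕄 : Measure (ProbVec E)))) :=
  convergence_to_unique_invariant_measure_of_aperiodic_general φ M hMmeas hMnn hMbd hPtrans hPirr
    hAper 𝕄 h𝕄 huniq
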